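/- Let y ≥ 2 and t be real numbers, let q > 1 be an integer, let χ be a primitive Dirichlet character modulo q whose L-function satisfies the Riemann Hypothesis, and let 2 ≤ x ≤ q. Then log|L(1/2 + 1/log y + it, χ)| ≤ Re ∑_{n ≤ x} [χ(n)Λ(n) / (n^{1/2 + max(1/log y, 1/log x) + it} log n)] · (log(x/n)/log x) + (log q + log⁺ t)/log x + O(1/log x), where the implied constant is absolute. -/

import Mathlib

section

open Complex Real Finset ArithmeticFunction

def dirichletRH {q : ℕ} [NeZero q] (χ : DirichletCharacter ℂ q) : Prop :=
  ∀ s : ℂ, 0 < s.re → s.re < 1 → DirichletCharacter.LFunction χ s = 0 → s.re = 1 / 2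

end

namespace Stmt6
open Complex Metric Set Filter Topology

/-- Logarithm of a nonvanishing function on a ball, with Borel–Carathéodory bound. -/
lemma exists_log_bound {g : ℂ → ℂ} {c : ℂ} {r M : ℝ} (hr : 0 < r) (hM : 0 < M)
    (hg : DifferentiableOn ℂ g (ball c r)) (hg0 : ∀ z ∈ ball c r, g z ≠ 0)
    (hb : ∀ z ∈ ball c r, ‖g z‖ ≤ Real.exp M * ‖g c‖) :
    ∃ φ : ℂ → ℂ, (∀ z ∈ ball c r, HasDerivAt φ (logDeriv g z) z) ∧
      ∀ z ∈ closedBall c (r / 2), ‖φ z‖ ≤ 2 * M := by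
  have hcm : c ∈ ball c r := mem_ball_self hr
  have hd : DifferentiableOn ℂ (logDeriv g) (ball c r) := by
    have : DifferentiableOn ℂ (fun z => deriv g z / g z) (ball c r) :=
      (hg.deriv isOpen_ball).div hg hg0
    exact this
  obtain ⟨φ, hφc, hφ⟩ := (hd.isExactOn_ball).with_val_at c 0
  refine ⟨φ, hφ, ?_⟩
  have hgd : ∀ z ∈ ball c r, HasDerivAt g (deriv g z) z := fun z hz =>
    ((hg z hz).differentiableAt (isOpen_ball.mem_nhds hz)).hasDerivAt
  have hexp : ∀ z ∈ ball c r, g z * exp (-φ z) = g c := by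
    intro z hz
    have hD : ∀ u ∈ ball c r, HasDerivAt (fun u => g u * exp (-φ u)) 0 u := by
      intro u hu
      have h1 := (hgd u hu).fun_mul ((hφ u hu).fun_neg.cexp)
      refine h1.congr_deriv ?_
      rw [logDeriv_apply]
      have := hg0 u hu
      field_simp
      ring
    have := isOpen_ball.is_const_of_deriv_eq_zero (convex_ball c r).isPreconnected
      (fun u hu => (hD u hu).differentiableAt.differentiableWithinAt)
      (fun u hu => (hD u hu).deriv) hz hcm
    simpa [hφc] using this
  have hre : ∀ z ∈ ball c r, (φ z).re ≤ M := by
    intro z hz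
    have h1 : ‖g z‖ * Real.exp (-(φ z).re) = ‖g c‖ := by
      rw [← hexp z hz, norm_mul, Complex.norm_exp]; simp
    have h2 := hb z hz
    rw [← h1] at h2
    have h3 : 0 < ‖g z‖ := norm_pos_iff.mpr (hg0 z hz)
    have h4 : 1 ≤ Real.exp (M + -(φ z).re) := by
      rw [Real.exp_add]
      nlinarith
    have := Real.one_le_exp_iff.mp h4
    linarith
  intro z hz
  have hz' : ‖z - c‖ ≤ r / 2 := by simpa [dist_eq_norm] using hz
  have hmaps : ∀ u ∈ ball (0:ℂ) r, c + u ∈ ball c r := by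
    intro u hu; simpa [dist_eq_norm] using hu
  have := Complex.borelCaratheodory_zero (f := fun u => φ (c + u)) (M := M) (R := r) (z := z - c)
    hM (by
      intro u hu
      have h := (hφ _ (hmaps u hu)).differentiableAt
      exact (h.comp u (by fun_prop)).differentiableWithinAt)
    (fun u hu => hre _ (hmaps u hu)) hr (by
      simp only [mem_ball, dist_zero_right]; linarith) (by simpa using hφc)
  simp only [add_sub_cancel] at this
  refine this.trans ?_
  rw [div_le_iff₀ (by linarith)]
  nlinarith [norm_nonneg (z - c)]

lemma logDeriv_bound {g : ℂ → ℂ} {c : ℂ} {r M : ℝ} (hr : 0 < r) (hM : 0 < M)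
    (hg : DifferentiableOn ℂ g (ball c r)) (hg0 : ∀ z ∈ ball c r, g z ≠ 0)
    (hb : ∀ z ∈ ball c r, ‖g z‖ ≤ Real.exp M * ‖g c‖) :
    ∀ z ∈ closedBall c (r / 4), ‖logDeriv g z‖ ≤ 8 * M / r := by
  obtain ⟨φ, hφ, hb⟩ := exists_log_bound hr hM hg hg0 hb
  intro z hz
  have hz' : dist z c ≤ r / 4 := by simpa using hz
  have hsub : closedBall z (r/4) ⊆ closedBall c (r / 2) :=
    closedBall_subset_closedBall' (by linarith)
  have hsub2 : closedBall z (r/4) ⊆ ball c r :=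
    hsub.trans (closedBall_subset_ball (by linarith))
  have := Complex.norm_deriv_le_of_forall_mem_sphere_norm_le (c := z) (R := r / 4) (C := 2 * M)
    (f := φ) (by linarith) (DifferentiableOn.diffContOnCl (by
      rw [closure_ball _ (by linarith)]
      intro u hu
      exact (hφ u (hsub2 hu)).differentiableAt.differentiableWithinAt))
    (fun u hu => hb u (hsub (sphere_subset_closedBall hu)))
  rw [(hφ z (hsub2 (mem_closedBall_self (by linarith)))).deriv] at this
  refine this.trans (le_of_eq ?_)
  field_simp; ring

lemma logDeriv_lipschitz {g : ℂ → ℂ} {c : ℂ} {r M : ℝ} (hr : 0 < r) (hM : 0 < M)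
    (hg : DifferentiableOn ℂ g (ball c r)) (hg0 : ∀ z ∈ ball c r, g z ≠ 0)
    (hb : ∀ z ∈ ball c r, ‖g z‖ ≤ Real.exp M * ‖g c‖) {z w : ℂ}
    (hz : z ∈ closedBall c (r / 8)) (hw : w ∈ closedBall c (r / 8)) :
    ‖logDeriv g z - logDeriv g w‖ ≤ 64 * M / r ^ 2 * ‖z - w‖ := by
  have hB := logDeriv_bound hr hM hg hg0 hb
  have hd : DifferentiableOn ℂ (logDeriv g) (ball c r) := by
    have : DifferentiableOn ℂ (fun z => deriv g z / g z) (ball c r) :=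
      (hg.deriv isOpen_ball).div hg hg0
    exact this
  refine Convex.norm_image_sub_le_of_norm_deriv_le (𝕜 := ℂ) (s := closedBall c (r / 8))
    (f := logDeriv g) ?_ ?_ (convex_closedBall _ _) hw hz
  · intro u hu
    exact (hd u (closedBall_subset_ball (by linarith) hu)).differentiableAt
      (isOpen_ball.mem_nhds (closedBall_subset_ball (by linarith) hu))
  · intro u hu
    have hu' : dist u c ≤ r / 8 := by simpa using hu
    have hsub : closedBall u (r/8) ⊆ closedBall c (r / 4) :=
      closedBall_subset_closedBall' (by linarith)
    have hsub2 : closedBall u (r/8) ⊆ ball c r :=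
      hsub.trans (closedBall_subset_ball (by linarith))
    have := Complex.norm_deriv_le_of_forall_mem_sphere_norm_le (c := u) (R := r / 8)
      (C := 8 * M / r)
      (f := logDeriv g) (by linarith) (DifferentiableOn.diffContOnCl (by
        rw [closure_ball _ (by linarith)]
        exact hd.mono hsub2))
      (fun v hv => hB v (hsub (sphere_subset_closedBall hv)))
    refine this.trans (le_of_eq ?_)
    field_simp; ring

/-- Partial factorisation. -/
def PF (G : ℂ → ℂ) (R : ℝ) (k : ℕ) (ρ : Fin k → ℂ) (g : ℂ → ℂ) : Prop :=
  Differentiable ℂ g ∧ (∀ i, ‖ρ i‖ ≤ R ∧ (ρ i).re = 0) ∧ ∀ z, G z = (∏ i, (z - ρ i)) * g z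

lemma PF.bound {G : ℂ → ℂ} {R : ℝ} {k : ℕ} {ρ : Fin k → ℂ} {g : ℂ → ℂ} (h : PF G R k ρ g)
    (hR : 1 ≤ R) {B : ℝ} (hB : ∀ z, ‖z‖ ≤ 4 * R → ‖G z‖ ≤ B) :
    ∀ z, ‖z‖ ≤ 4 * R → ‖g z‖ * ((3/2) ^ k * ∏ i, ‖1 - ρ i‖) ≤ B := by
  obtain ⟨hd, hρ, hf⟩ := h
  have hpos : 0 < (3/2 : ℝ) ^ k * ∏ i, ‖1 - ρ i‖ := by
    refine mul_pos (by positivity) (Finset.prod_pos fun i _ => norm_pos_iff.mpr ?_)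
    intro h0
    have := congrArg re h0
    simp [(hρ i).2] at this
  have key : ∀ z ∈ closure (ball (0:ℂ) (4 * R)), ‖g z‖ ≤ B / ((3/2) ^ k * ∏ i, ‖1 - ρ i‖) := by
    intro z hz
    refine Complex.norm_le_of_forall_mem_frontier_norm_le (isBounded_ball)
      hd.diffContOnCl ?_ hz
    intro w hw
    rw [frontier_ball _ (by linarith)] at hw
    have hw' : ‖w‖ = 4 * R := by simpa using hw
    rw [le_div_iff₀ hpos]
    refine le_trans ?_ (hB w hw'.le)
    rw [hf w, norm_mul, norm_prod, mul_comm]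
    gcongr
    have : (3/2 : ℝ) ^ k = ∏ i : Fin k, (3/2 : ℝ) := by
      rw [Finset.prod_const, Finset.card_univ, Fintype.card_fin]
    rw [this, ← Finset.prod_mul_distrib]
    refine Finset.prod_le_prod (fun i _ => by positivity) fun i _ => ?_
    have h1 : ‖1 - ρ i‖ ≤ 1 + R := (norm_sub_le _ _).trans (by simpa using (hρ i).1)
    have h2 : 4 * R - R ≤ ‖w - ρ i‖ := by
      have := norm_sub_norm_le w (ρ i)
      have := (hρ i).1
      linarith
    linarith
  intro z hz
  have := key z (by rw [closure_ball _ (by linarith)]; simpa using hz)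
  rwa [le_div_iff₀ hpos] at this

lemma exists_PF {G : ℂ → ℂ} (hG : Differentiable ℂ G) (hz : ∀ z, G z = 0 → z.re = 0)
    {R : ℝ} (hR : 1 ≤ R) :
    ∃ k ρ g, PF G R k ρ g ∧ ∀ z, ‖z‖ ≤ R → g z ≠ 0 := by
  by_contra hcon
  push Not at hcon
  have hall : ∀ k, ∃ ρ g, PF G R k ρ g := by
    intro k
    induction k with
    | zero => exact ⟨Fin.elim0, G, hG, fun i => i.elim0, by simp⟩
    | succ k ih =>
      obtain ⟨ρ, g, h⟩ := ih
      obtain ⟨a, ha, hga⟩ := hcon k ρ g h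
      obtain ⟨hd, hρ, hf⟩ := h
      refine ⟨Fin.cons a ρ, dslope g a, ?_, ?_, ?_⟩
      · rw [← differentiableOn_univ, Complex.differentiableOn_dslope univ_mem]
        exact hd.differentiableOn
      · intro i
        refine Fin.cases ?_ (fun j => ?_) i
        · simp only [Fin.cons_zero]
          exact ⟨ha, hz a (by rw [hf, hga, mul_zero])⟩
        · simpa using hρ j
      · intro z
        have := sub_smul_dslope g a z
        rw [hga, sub_zero, smul_eq_mul] at this
        rw [Fin.prod_univ_succ]
        simp only [Fin.cons_zero, Fin.cons_succ]
        rw [hf, ← this]; ring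
  obtain ⟨B, hB⟩ := (isCompact_closedBall (0:ℂ) (4*R)).exists_bound_of_continuousOn
    hG.continuous.continuousOn
  have hG1 : 0 < ‖G 1‖ := norm_pos_iff.mpr (fun h => by simpa using hz 1 h)
  have hk : ∀ k : ℕ, (3/2:ℝ) ^ k ≤ B / ‖G 1‖ := by
    intro k
    obtain ⟨ρ, g, h⟩ := hall k
    have := h.bound hR (fun z hz => hB z (by simpa using hz)) 1 (by simp; linarith)
    rw [le_div_iff₀ hG1, h.2.2 1, norm_mul, norm_prod]
    linarith
  obtain ⟨k, hk'⟩ := pow_unbounded_of_one_lt (B / ‖G 1‖) (show (1:ℝ) < 3/2 by norm_num)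
  exact absurd (hk k) (not_le.mpr hk')

theorem re_logDeriv_nonneg {G : ℂ → ℂ} (hG : Differentiable ℂ G)
    (hsym : ∀ x y : ℝ, ‖G (-x + y * I)‖ = ‖G (x + y * I)‖)
    (hz : ∀ z, G z = 0 → z.re = 0) {M : ℝ → ℝ}
    (hM : Tendsto (fun R => M R / R ^ 2) atTop (𝓝 0))
    (hgrow : ∀ᶠ R in atTop, ∀ z, ‖z‖ ≤ R → ‖G z‖ ≤ Real.exp (M R))
    {z : ℂ} (hzre : 0 < z.re) : 0 ≤ (logDeriv G z).re := by
  have hG1 : 0 < ‖G 1‖ := norm_pos_iff.mpr (fun h => by simpa using hz 1 h)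
  set m : ℝ → ℝ := fun R => max (M (4 * R) - Real.log ‖G 1‖) 1 with hm
  have hlim : Tendsto (fun R => -(64 * m R / (R - 1) ^ 2 * z.re)) atTop (𝓝 0) := by
    have h4 : Tendsto (fun R : ℝ => 4 * R) atTop atTop :=
      tendsto_id.const_mul_atTop (by norm_num)
    have h1 : Tendsto (fun R : ℝ => M (4 * R) / R ^ 2) atTop (𝓝 0) := by
      have := (hM.comp h4).const_mul 16
      simp only [mul_zero] at this
      refine this.congr fun R => ?_
      simp only [Function.comp]
      rcases eq_or_ne R 0 with rfl | hR
      · simp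
      field_simp; ring
    have h2 : ∀ c : ℝ, Tendsto (fun R : ℝ => c / R ^ 2) atTop (𝓝 0) := fun c =>
      tendsto_const_nhds.div_atTop (tendsto_pow_atTop two_ne_zero)
    have h3 : Tendsto (fun R : ℝ => m R / R ^ 2) atTop (𝓝 0) := by
      have := (h1.sub (h2 (Real.log ‖G 1‖))).max (h2 1)
      simp only [sub_zero, max_self] at this
      refine this.congr fun R => ?_
      simp only [hm]
      rw [← sub_div, max_div_div_right (by positivity)]
    have h5 : Tendsto (fun R : ℝ => (R / (R - 1)) ^ 2) atTop (𝓝 1) := by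
      have : Tendsto (fun R : ℝ => 1 + 1 / (R - 1)) atTop (𝓝 (1 + 0)) :=
        tendsto_const_nhds.add (tendsto_const_nhds.div_atTop (tendsto_atTop_add_const_right _ _ tendsto_id))
      have := this.pow 2
      simp only [add_zero, one_pow] at this
      refine this.congr' ?_
      filter_upwards [eventually_gt_atTop 1] with R hR
      have : R - 1 ≠ 0 := by linarith
      congr 1
      field_simp; ring
    have := (((h3.mul h5).const_mul 64).mul_const z.re).neg
    simp only [mul_one, mul_zero, zero_mul, neg_zero] at this
    refine this.congr' ?_
    filter_upwards [eventually_gt_atTop 1] with R hR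
    have : R - 1 ≠ 0 := by linarith
    field_simp
  refine le_of_tendsto hlim ?_
  have h4 : Tendsto (fun R : ℝ => 4 * R) atTop atTop :=
    tendsto_id.const_mul_atTop (by norm_num)
  filter_upwards [h4.eventually hgrow, eventually_ge_atTop (1 + 8 * (‖z‖ + 1))] with R hgr hRz
  have hR : 1 ≤ R := by nlinarith [norm_nonneg z]
  have hR1 : 0 < R - 1 := by nlinarith [norm_nonneg z]
  obtain ⟨k, ρ, g, hPF, hg0⟩ := exists_PF hG hz hR
  have hbd := hPF.bound hR hgr
  obtain ⟨hd, hρ, hf⟩ := hPF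
  have hP1 : 0 < ∏ i, ‖1 - ρ i‖ := by
    refine Finset.prod_pos fun i _ => norm_pos_iff.mpr ?_
    intro h0
    have := congrArg re h0
    simp [(hρ i).2] at this
  have hball : ∀ w ∈ ball (1:ℂ) (R - 1), ‖w‖ ≤ R := by
    intro w hw
    have h1 : ‖w - 1‖ < R - 1 := by simpa [dist_eq_norm] using hw
    have h2 : ‖w‖ ≤ ‖w - 1‖ + ‖(1:ℂ)‖ := by simpa using norm_add_le (w - 1) 1
    rw [norm_one] at h2
    linarith
  have hm0 : 0 < m R := lt_of_lt_of_le one_pos (le_max_right _ _)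
  have hgb : ∀ w ∈ ball (1:ℂ) (R - 1), ‖g w‖ ≤ Real.exp (m R) * ‖g 1‖ := by
    intro w hw
    have h1 := hbd w ((hball w hw).trans (by linarith))
    have h2 : (1:ℝ) ≤ (3/2) ^ k := one_le_pow₀ (by norm_num)
    have h3 : ‖g w‖ * ∏ i, ‖1 - ρ i‖ ≤ Real.exp (M (4 * R)) := by
      refine le_trans ?_ h1
      have : 0 ≤ ‖g w‖ * ∏ i, ‖1 - ρ i‖ := by positivity
      nlinarith
    have h4 : Real.exp (M (4 * R)) ≤ Real.exp (m R) * ‖G 1‖ := by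
      have : Real.exp (m R) * ‖G 1‖ = Real.exp (m R + Real.log ‖G 1‖) := by
        rw [Real.exp_add, Real.exp_log hG1]
      rw [this, Real.exp_le_exp]
      have := le_max_left (M (4 * R) - Real.log ‖G 1‖) 1
      simp only [hm]; linarith
    have h5 : ‖G 1‖ = (∏ i, ‖1 - ρ i‖) * ‖g 1‖ := by rw [hf 1, norm_mul, norm_prod]
    have h6 := h3.trans h4
    rw [h5] at h6
    refine le_of_mul_le_mul_right (a := ∏ i, ‖1 - ρ i‖) ?_ hP1
    linarith
  have hmem : ∀ w : ℂ, ‖w‖ ≤ ‖z‖ → w ∈ closedBall (1:ℂ) ((R - 1) / 8) := by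
    intro w hw
    rw [mem_closedBall, dist_eq_norm]
    have := norm_sub_le w 1
    rw [norm_one] at this
    linarith
  set z0 : ℂ := z.im * I with hz0
  have hz0n : ‖z0‖ ≤ ‖z‖ := by
    simp only [hz0, norm_mul, norm_I, mul_one, norm_real]
    exact Complex.abs_im_le_norm z
  have hLip := logDeriv_lipschitz hR1 hm0 hd.differentiableOn
    (fun w hw => hg0 w (hball w hw)) hgb (hmem z le_rfl) (hmem z0 hz0n)
  have hzz0 : ‖z - z0‖ = z.re := by
    have : z - z0 = (z.re : ℂ) := by
      apply Complex.ext <;> simp [hz0]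
    rw [this, norm_real, Real.norm_of_nonneg hzre.le]
  rw [hzz0] at hLip
  -- derivative at the axis vanishes
  have hgz0 : g z0 ≠ 0 := hg0 z0 (by nlinarith [norm_nonneg z])
  have haxis : (logDeriv g z0).re = 0 := by
    have hev : ∀ x : ℝ, normSq (g (((-x : ℝ) : ℂ) + z0)) = normSq (g ((x : ℂ) + z0)) := by
      intro x
      rcases eq_or_ne x 0 with rfl | hx
      · simp
      have h1 := hsym x z.im
      rw [← hz0, hf, hf, norm_mul, norm_mul, norm_prod, norm_prod] at h1
      have h2 : ∏ i, ‖-(x:ℂ) + z0 - ρ i‖ = ∏ i, ‖(x:ℂ) + z0 - ρ i‖ := by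
        refine Finset.prod_congr rfl fun i _ => ?_
        rw [← sq_eq_sq₀ (norm_nonneg _) (norm_nonneg _), Complex.sq_norm, Complex.sq_norm,
          normSq_apply, normSq_apply]
        simp [hz0, (hρ i).2]
      have h3 : ∏ i, ‖(x:ℂ) + z0 - ρ i‖ ≠ 0 := by
        refine Finset.prod_ne_zero_iff.mpr fun i _ => norm_ne_zero_iff.mpr ?_
        intro h0
        have := congrArg re h0
        simp [hz0, (hρ i).2, hx] at this
      rw [h2] at h1
      have h4 := mul_left_cancel₀ h3 h1
      rw [normSq_eq_norm_sq, normSq_eq_norm_sq]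
      push_cast
      rw [h4]
    have hder : HasDerivAt (fun x : ℝ => normSq (g ((x : ℂ) + z0)))
        (2 * (deriv g z0 * (starRingEnd ℂ) (g z0)).re) 0 := by
      have h1 : HasDerivAt (fun x : ℝ => g ((x : ℂ) + z0)) (deriv g z0) 0 := by
        have h2 : HasDerivAt g (deriv g z0) (((0:ℝ):ℂ) + z0) := by
          simpa using (hd z0).hasDerivAt
        have h3 : HasDerivAt (fun w : ℂ => g (w + z0)) (deriv g z0) ((0:ℝ):ℂ) :=
          h2.comp_add_const _ _
        exact h3.comp_ofReal
      have h2 : HasDerivAt (fun x : ℝ => (g ((x : ℂ) + z0)).re) (deriv g z0).re 0 :=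
        (Complex.reCLM.hasFDerivAt.comp_hasDerivAt (0:ℝ) h1)
      have h3 : HasDerivAt (fun x : ℝ => (g ((x : ℂ) + z0)).im) (deriv g z0).im 0 :=
        (Complex.imCLM.hasFDerivAt.comp_hasDerivAt (0:ℝ) h1)
      have h4 := (h2.fun_mul h2).fun_add (h3.fun_mul h3)
      simp only [normSq_apply]
      refine h4.congr_deriv ?_
      simp
      ring
    have hder2 : HasDerivAt (fun x : ℝ => normSq (g ((x : ℂ) + z0)))
        (-(2 * (deriv g z0 * (starRingEnd ℂ) (g z0)).re)) 0 := by
      have h1 : HasDerivAt (fun x : ℝ => normSq (g ((x : ℂ) + z0)))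
        (2 * (deriv g z0 * (starRingEnd ℂ) (g z0)).re) (-0) := by simpa using hder
      have h2 := h1.scomp (0:ℝ) (hasDerivAt_neg (0:ℝ))
      rw [neg_smul, one_smul] at h2
      refine h2.congr_of_eventuallyEq (Eventually.of_forall fun x => ?_)
      exact (hev x).symm
    have h0 := hder.unique hder2
    have h00 : (deriv g z0 * (starRingEnd ℂ) (g z0)).re = 0 := by linarith
    rw [logDeriv_apply, div_eq_mul_inv, Complex.inv_def, ← mul_assoc]
    simp only [re_mul_ofReal, h00, zero_mul]
  have hre : -(64 * m R / (R - 1) ^ 2 * z.re) ≤ (logDeriv g z).re := by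
    have h1 := (abs_le.mp ((Complex.abs_re_le_norm _).trans hLip)).1
    rw [sub_re, haxis, sub_zero] at h1
    exact h1
  refine hre.trans ?_
  have hne : ∀ i, z - ρ i ≠ 0 := by
    intro i h0
    have := congrArg re h0
    simp [(hρ i).2] at this
    linarith
  have hGz : logDeriv G z = logDeriv (fun w => ∏ i, (w - ρ i)) z + logDeriv g z := by
    have : G = fun w => (∏ i, (w - ρ i)) * g w := funext hf
    rw [this]
    exact logDeriv_mul z (Finset.prod_ne_zero_iff.mpr fun i _ => hne i)
      (hg0 z (by nlinarith [norm_nonneg z])) (by fun_prop) (hd z)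
  rw [hGz, logDeriv_prod (fun i _ => hne i) (fun i _ => by fun_prop), add_re, re_sum]
  have : 0 ≤ ∑ i, (logDeriv (fun w => w - ρ i) z).re := by
    refine Finset.sum_nonneg fun i _ => ?_
    rw [logDeriv_apply]
    have : deriv (fun w => w - ρ i) z = 1 := by
      simp
    rw [this, one_div, inv_re]
    refine div_nonneg ?_ (normSq_nonneg _)
    simp [(hρ i).2, hzre.le]
  linarith
end Stmt6

namespace Stmt6
open Complex Metric Set Filter Topology

lemma norm_Gamma_le {z : ℂ} (hz : 0 < z.re) : ‖Gamma z‖ ≤ Real.Gamma z.re := by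
  rw [Gamma_eq_integral hz, Real.Gamma_eq_integral hz, GammaIntegral]
  refine (MeasureTheory.norm_integral_le_integral_norm _).trans (le_of_eq ?_)
  refine MeasureTheory.setIntegral_congr_fun measurableSet_Ioi fun x hx => ?_
  have hx' : 0 < x := hx
  simp only [norm_mul, norm_real, Real.norm_eq_abs, Real.abs_exp]
  rw [norm_cpow_eq_rpow_re_of_pos hx']
  simp

lemma logGamma_add_le {N a r : ℝ} (hr : 0 < r) (hN : 2 * (r + 1) ≤ N) (ha : |a| < r) :
    Real.log (Real.Gamma (N + a)) ≤ Real.log (Real.Gamma N) + a * Real.log N + r := by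
  have hconv := Real.convexOn_log_Gamma
  have hfe : ∀ x : ℝ, 0 < x → Real.log (Real.Gamma (x + 1)) = Real.log x + Real.log (Real.Gamma x) := by
    intro x hx
    rw [Real.Gamma_add_one hx.ne', Real.log_mul hx.ne' (Real.Gamma_pos_of_pos hx).ne']
  have ha' := abs_lt.mp ha
  have hN0 : 0 < N := by linarith
  have hlog : ∀ t : ℝ, N / 2 ≤ t → t ≤ 2 * N → |Real.log t - Real.log N| ≤ 1 := by
    intro t h1 h2
    have ht : 0 < t := by linarith
    have hl2 : Real.log 2 ≤ 1 := by linarith [Real.log_two_lt_d9]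
    rw [abs_le]
    constructor
    · have := Real.log_le_log (by positivity) h1
      rw [Real.log_div hN0.ne' two_ne_zero] at this
      linarith
    · have := Real.log_le_log ht h2
      rw [Real.log_mul two_ne_zero hN0.ne'] at this
      linarith
  rcases lt_trichotomy a 0 with h | rfl | h
  · have h1 := hconv.slope_mono_adjacent (x := N + a - 1) (y := N + a) (z := N)
      (by simp; linarith) (by simp; linarith) (by linarith) (by linarith)
    have h2 := hfe (N + a - 1) (by linarith)
    rw [sub_add_cancel] at h2
    simp only [Function.comp] at h1
    rw [h2] at h1 
    have h3 := hlog (N + a - 1) (by linarith) (by linarith)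
    rw [le_div_iff₀ (by linarith)] at h1
    have h4 := abs_le.mp h3
    have h5 : (N + a - (N + a - 1)) = 1 := by ring
    rw [h5] at h1
    rw [h2]
    nlinarith
  · simp; linarith
  · have h1 := hconv.slope_mono_adjacent (x := N) (y := N + a) (z := N + a + 1)
      (by simp; linarith) (by simp; linarith) (by linarith) (by linarith)
    have h2 := hfe (N + a) (by linarith)
    simp only [Function.comp] at h1
    rw [h2] at h1 
    have h3 := hlog (N + a) (by linarith) (by linarith)
    rw [div_le_iff₀ (by linarith)] at h1
    have h4 := abs_le.mp h3
    have h5 : (N + a + 1 - (N + a)) = 1 := by ring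
    rw [h5] at h1
    nlinarith

lemma digamma_far {z : ℂ} (hz : 0 < z.re) :
    ∀ᶠ N : ℕ in atTop, ‖logDeriv Gamma (z + N) - Real.log N‖ ≤ 8 := by
  set r : ℝ := 4 * (‖z‖ + 1) with hr
  have hr0 : 0 < r := by positivity
  obtain ⟨N0, hN0⟩ := exists_nat_ge (2 * (r + 1))
  filter_upwards [eventually_ge_atTop N0] with N hN
  have hN' : 2 * (r + 1) ≤ (N:ℝ) := hN0.trans (by exact_mod_cast hN)
  have hNpos : 0 < (N:ℝ) := by linarith
  set g : ℂ → ℂ := fun w => Gamma w * exp (-w * Real.log N) with hg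
  have hre : ∀ w ∈ ball (N:ℂ) r, 0 < w.re := by
    intro w hw
    have h1 : ‖w - N‖ < r := by simpa [dist_eq_norm] using hw
    have h2 := abs_lt.mp ((abs_re_le_norm _).trans_lt h1)
    simp at h2
    linarith
  have hΓd : ∀ w : ℂ, 0 < w.re → DifferentiableAt ℂ Gamma w := fun w hw =>
    differentiableAt_Gamma w (fun m h => by rw [h] at hw; simp at hw; linarith [(Nat.cast_nonneg m : (0:ℝ) ≤ m)])
  have hgd : DifferentiableOn ℂ g (ball (N:ℂ) r) := by
    intro w hw
    have := hΓd w (hre w hw)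
    exact DifferentiableAt.differentiableWithinAt (by fun_prop)
  have hg0 : ∀ w ∈ ball (N:ℂ) r, g w ≠ 0 := fun w hw =>
    mul_ne_zero (Gamma_ne_zero_of_re_pos (hre w hw)) (exp_ne_zero _)
  have hb : ∀ w ∈ ball (N:ℂ) r, ‖g w‖ ≤ Real.exp r * ‖g N‖ := by
    intro w hw
    have h1 : ‖w - N‖ < r := by simpa [dist_eq_norm] using hw
    have h2 := ((abs_re_le_norm _).trans_lt h1)
    simp only [sub_re, natCast_re] at h2
    have h3 := logGamma_add_le hr0 hN' h2
    rw [add_sub_cancel] at h3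
    have hGw := Real.Gamma_pos_of_pos (hre w hw)
    have hGN := Real.Gamma_pos_of_pos hNpos
    have h4 : ‖g N‖ = Real.Gamma N * Real.exp (-N * Real.log N) := by
      simp only [hg, norm_mul, norm_exp]
      rw [← ofReal_natCast, Gamma_ofReal, norm_real, Real.norm_of_nonneg hGN.le]
      congr 2
      rw [← ofReal_neg, ← ofReal_mul, ofReal_re]
    have h5 : ‖g w‖ ≤ Real.Gamma w.re * Real.exp (-w.re * Real.log N) := by
      simp only [hg, norm_mul, norm_exp]
      have : (-w * (Real.log N : ℂ)).re = -w.re * Real.log N := by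
        rw [re_mul_ofReal, neg_re]
      rw [this]
      gcongr
      exact norm_Gamma_le (hre w hw)
    rw [h4]
    refine h5.trans ?_
    rw [← Real.exp_log hGw, ← Real.exp_log hGN, ← Real.exp_add, ← Real.exp_add, ← Real.exp_add,
      Real.exp_le_exp]
    linarith
  have hmem : z + N ∈ closedBall (N:ℂ) (r / 4) := by
    simp [dist_eq_norm, hr]
  have := logDeriv_bound hr0 hr0 hgd hg0 hb _ hmem
  have h8 : 8 * r / r = 8 := by field_simp
  rw [h8] at this
  have hzN : 0 < (z + N).re := by simp; linarith
  have hld : logDeriv g (z + N) = logDeriv Gamma (z + N) - Real.log N := by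
    rw [hg, logDeriv_mul (f := Gamma) (g := fun w : ℂ => exp (-w * Real.log N)) _
      (Gamma_ne_zero_of_re_pos hzN) (exp_ne_zero _) (hΓd _ hzN) (by fun_prop)]
    have : logDeriv (fun w : ℂ => exp (-w * Real.log N)) (z + N) = - Real.log N := by
      rw [logDeriv_apply]
      have hD : HasDerivAt (fun w : ℂ => exp (-w * Real.log N))
          (exp (-(z+N) * Real.log N) * (-1 * Real.log N)) (z + N) :=
        ((hasDerivAt_neg _).mul_const _).cexp
      rw [hD.deriv]
      field_simp [exp_ne_zero]
    rw [this]; ring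
  rwa [hld] at this

lemma log_norm_one_add_le {w : ℂ} (hw : 1 + w ≠ 0) : Real.log ‖1 + w‖ ≤ w.re + ‖w‖ ^ 2 / 2 := by
  have h1 : ‖1 + w‖ ^ 2 ≤ Real.exp (2 * w.re + ‖w‖ ^ 2) := by
    refine le_trans (le_of_eq ?_) (Real.add_one_le_exp _)
    rw [Complex.sq_norm, Complex.sq_norm, normSq_apply, normSq_apply]
    simp; ring
  have h2 := Real.log_le_log (by have := norm_pos_iff.mpr hw; positivity) h1
  rw [Real.log_exp, Real.log_pow] at h2
  push_cast at h2
  linarith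

lemma digamma_step {z : ℂ} (hz : 0 < z.re) :
    (logDeriv Gamma z).re - Real.log ‖z‖ ≤
      (logDeriv Gamma (z + 1)).re - Real.log ‖z + 1‖ + 1 / (2 * z.re ^ 2) := by
  have hz0 : z ≠ 0 := fun h => by simp [h] at hz
  have hz1 : z + 1 ≠ 0 := fun h => by
    have := congrArg re h; simp at this; linarith
  have h1 := digamma_apply_add_one z (fun m h => by
    rw [h] at hz; simp at hz; linarith [(Nat.cast_nonneg m : (0:ℝ) ≤ m)])
  rw [digamma_def] at h1
  rw [h1, add_re]
  have h2 : 1 + z⁻¹ ≠ 0 := by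
    intro h; apply hz1; field_simp at h; simpa using h
  have h3 := log_norm_one_add_le h2
  have h4 : ‖z + 1‖ = ‖z‖ * ‖1 + z⁻¹‖ := by
    rw [← norm_mul]; congr 1; field_simp
  rw [h4, Real.log_mul (norm_ne_zero_iff.mpr hz0) (norm_ne_zero_iff.mpr h2)]
  have h5 : ‖z⁻¹‖ ^ 2 / 2 ≤ 1 / (2 * z.re ^ 2) := by
    rw [norm_inv, inv_pow, ← one_div, div_div]
    have : z.re ≤ ‖z‖ := re_le_norm z
    have : z.re ^ 2 ≤ ‖z‖ ^ 2 := by gcongr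
    apply one_div_le_one_div_of_le (by positivity)
    linarith
  linarith

lemma digamma_steps {z : ℂ} (hz : 0 < z.re) (N : ℕ) :
    (logDeriv Gamma z).re - Real.log ‖z‖ ≤
      (logDeriv Gamma (z + N)).re - Real.log ‖z + N‖ +
        ∑ j ∈ Finset.range N, 1 / (2 * (z.re + j) ^ 2) := by
  induction N with
  | zero => simp
  | succ N ih =>
    have h := digamma_step (z := z + N) (by simp; positivity)
    rw [Finset.sum_range_succ]
    push_cast
    rw [← add_assoc z]
    simp only [add_re, natCast_re] at h ih ⊢
    linarith

lemma digamma_bound : ∃ C : ℝ, 0 ≤ C ∧ ∀ z : ℂ, 1/4 ≤ z.re →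
    (logDeriv Gamma z).re ≤ Real.log ‖z‖ + C := by
  have hs : Summable (fun j : ℕ => 1 / (2 * ((1/4:ℝ) + j) ^ 2)) := by
    have h1 : Summable (fun j : ℕ => 16 * (1 / ((j:ℝ) + 1) ^ 2)) := by
      have := (summable_nat_add_iff 1).mpr (Real.summable_one_div_nat_pow.mpr (one_lt_two))
      simpa using this.mul_left 16
    refine Summable.of_nonneg_of_le (fun j => by positivity) (fun j => ?_) h1
    rw [mul_one_div, div_le_div_iff₀ (by positivity) (by positivity)]
    have : (0:ℝ) ≤ j := by positivity
    nlinarith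
  refine ⟨8 + ∑' j : ℕ, 1 / (2 * ((1/4:ℝ) + j) ^ 2), by positivity, ?_⟩
  intro z hz
  have hz0 : 0 < z.re := by linarith
  obtain ⟨N, hN, hN1⟩ := ((digamma_far hz0).and (eventually_ge_atTop 1)).exists
  have h1 := digamma_steps hz0 N
  have h2 : ∑ j ∈ Finset.range N, 1 / (2 * (z.re + j) ^ 2) ≤ ∑' j : ℕ, 1 / (2 * ((1/4:ℝ) + j) ^ 2) := by
    refine le_trans ?_ (hs.sum_le_tsum (Finset.range N) (fun j _ => by positivity))
    refine Finset.sum_le_sum fun j _ => ?_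
    gcongr
  have h3 := (re_le_norm _).trans hN
  simp only [sub_re, ofReal_re] at h3
  have h4 : Real.log N ≤ Real.log ‖z + N‖ := by
    apply Real.log_le_log (by exact_mod_cast hN1)
    refine le_trans ?_ (re_le_norm _)
    simp; linarith
  linarith

lemma logDeriv_Gammaℝ {s : ℂ} (hs : 0 < s.re) :
    logDeriv Gammaℝ s = -(Real.log Real.pi) / 2 + logDeriv Gamma (s / 2) / 2 := by
  have h2 : 0 < (s / 2).re := by simp [hs]
  have hd : DifferentiableAt ℂ Gamma (s / 2) := differentiableAt_Gamma _ (fun m h => by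
    rw [h] at h2; simp at h2; linarith [(Nat.cast_nonneg m : (0:ℝ) ≤ m)])
  have hpi : (Real.pi : ℂ) ≠ 0 := by exact_mod_cast Real.pi_ne_zero
  have h1 : Gammaℝ = fun s : ℂ => (Real.pi : ℂ) ^ (-s / 2) * Gamma (s / 2) := by
    ext s; exact Gammaℝ_def s
  have hD1 : HasDerivAt (fun s : ℂ => (Real.pi : ℂ) ^ (-s / 2))
      ((Real.pi : ℂ) ^ (-s / 2) * Complex.log Real.pi * (-1 / 2)) s :=
    ((hasDerivAt_neg s).div_const 2).const_cpow (Or.inl hpi)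
  have hD2 : HasDerivAt (fun s : ℂ => Gamma (s / 2)) (deriv Gamma (s / 2) * (1 / 2)) s :=
    HasDerivAt.comp s (h₂ := Gamma) hd.hasDerivAt ((hasDerivAt_id s).div_const 2)
  have hp : (Real.pi : ℂ) ^ (-s / 2) ≠ 0 := by simp [cpow_eq_zero_iff, hpi]
  rw [h1, logDeriv_mul (f := fun s : ℂ => (Real.pi : ℂ) ^ (-s / 2)) (g := fun s : ℂ => Gamma (s / 2)) s hp
    (Gamma_ne_zero_of_re_pos h2) hD1.differentiableAt hD2.differentiableAt, logDeriv_apply,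
    logDeriv_apply, logDeriv_apply, hD1.deriv, hD2.deriv, ofReal_log Real.pi_pos.le]
  congr 1
  · field_simp
  · ring

lemma logDeriv_Gammaℝ_bound : ∃ C : ℝ, 0 ≤ C ∧ ∀ s : ℂ, 1/2 ≤ s.re →
    (logDeriv Gammaℝ s).re ≤ Real.log ‖s + 1‖ / 2 + C ∧
    (logDeriv (fun s => Gammaℝ (s + 1)) s).re ≤ Real.log ‖s + 1‖ / 2 + C := by
  obtain ⟨C, hC0, hC⟩ := digamma_bound
  have hpi : 0 ≤ Real.log Real.pi := Real.log_nonneg (by linarith [Real.two_le_pi])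
  have key : ∀ s w : ℂ, 1/2 ≤ s.re → ‖s‖ ≤ ‖w‖ → (logDeriv Gammaℝ s).re ≤ Real.log ‖w‖ / 2 + C := by
    intro s w hs hw
    have hs0 : 0 < ‖s‖ := by have := re_le_norm s; linarith
    have h1 := hC (s / 2) (by simp; linarith)
    rw [logDeriv_Gammaℝ (by linarith)]
    have h2 : Real.log ‖s / 2‖ ≤ Real.log ‖w‖ := by
      apply Real.log_le_log (by rw [norm_div]; simp; intro h; simp [h] at hs0)
      simp; linarith
    have h3 : (-(Real.log Real.pi : ℂ) / 2 + logDeriv Gamma (s / 2) / 2).re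
        = -Real.log Real.pi / 2 + (logDeriv Gamma (s / 2)).re / 2 := by
      simp
    rw [h3]
    linarith
  refine ⟨C, hC0, fun s hs => ⟨key s (s + 1) hs ?_, ?_⟩⟩
  · rw [← sq_le_sq₀ (norm_nonneg _) (norm_nonneg _), Complex.sq_norm, Complex.sq_norm,
      normSq_apply, normSq_apply]
    simp; nlinarith
  · have h : logDeriv (fun s => Gammaℝ (s + 1)) s = logDeriv Gammaℝ (s + 1) := by
      rw [logDeriv_apply, logDeriv_apply, deriv_comp_add_const]
    rw [h]
    exact key (s + 1) (s + 1) (by simp; linarith) le_rfl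
end Stmt6

namespace Stmt6
open Complex Metric Set Filter Topology MeasureTheory
open DirichletCharacter
open scoped ComplexConjugate

lemma char_sum_bound {q : ℕ} [NeZero q] (hq : 1 < q) (χ : DirichletCharacter ℂ q) (hχ : χ ≠ 1)
    (n : ℕ) : ‖∑ k ∈ Finset.Icc 1 n, χ k‖ ≤ q := by
  have h0 : ∀ n : ℕ, ∑ k ∈ Finset.Icc 1 n, χ k = ∑ k ∈ Finset.range (n + 1), χ k := by
    intro n
    rw [Finset.sum_range_eq_add_Ico _ (Nat.succ_pos n)]
    have : χ ((0:ℕ) : ZMod q) = 0 := by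
      rw [Nat.cast_zero]; exact χ.map_zero' hq.ne'
    rw [this, zero_add]; rfl
  have hper : ∑ k ∈ Finset.range q, χ k = 0 := by
    rw [← χ.sum_eq_zero_of_ne_one hχ]
    obtain ⟨Q, rfl⟩ : ∃ Q, q = Q + 1 := ⟨q - 1, by omega⟩
    rw [Finset.sum_range]
    refine Finset.sum_congr rfl fun i _ => ?_
    congr 1
    exact Fin.cast_val_eq_self i
  rw [h0]
  have key : ∀ m : ℕ, ‖∑ k ∈ Finset.range m, χ k‖ ≤ q := by
    intro m
    induction m using Nat.strong_induction_on with
    | _ m ih =>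
      rcases lt_or_ge m q with h | h
      · refine (norm_sum_le _ _).trans ?_
        refine (Finset.sum_le_sum fun i _ => DirichletCharacter.norm_le_one χ _).trans ?_
        simp; exact h.le
      · obtain ⟨d, rfl⟩ := Nat.exists_eq_add_of_le h
        rw [Finset.sum_range_add, hper, zero_add]
        simpa using ih d (by omega)
  exact key _

noncomputable def PS {q : ℕ} (χ : DirichletCharacter ℂ q) (u : ℝ) : ℂ :=
  ∑ k ∈ Finset.Icc 1 ⌊u⌋₊, χ k

lemma PS_meas {q : ℕ} (χ : DirichletCharacter ℂ q) : Measurable (PS χ) := by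
  have : PS χ = (fun n : ℕ => ∑ k ∈ Finset.Icc 1 n, χ k) ∘ (fun u : ℝ => ⌊u⌋₊) := rfl
  rw [this]
  exact (measurable_from_nat).comp Nat.measurable_floor

lemma PS_zero {q : ℕ} (χ : DirichletCharacter ℂ q) {u : ℝ} (hu : u < 1) : PS χ u = 0 := by
  simp [PS, Nat.floor_eq_zero.mpr hu]

lemma LFunction_bound {q : ℕ} [NeZero q] (hq : 1 < q) (χ : DirichletCharacter ℂ q) (hχ : χ ≠ 1)
    {s : ℂ} (hs : 1 / 2 ≤ s.re) : ‖LFunction χ s‖ ≤ 2 * q * ‖s‖ := by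
  have hb : ∀ u, ‖PS χ u‖ ≤ q := fun u => char_sum_bound hq χ hχ _
  have hloc : LocallyIntegrableOn (PS χ) (Ioi 0) := by
    have : LocallyIntegrable (fun _ : ℝ => (q:ℝ)) := locallyIntegrable_const _
    exact (this.mono (PS_meas χ).aestronglyMeasurable
      (Eventually.of_forall fun u => by simpa using hb u)).locallyIntegrableOn _
  have htop : PS χ =O[atTop] (fun u : ℝ => u ^ (-(0:ℝ))) := by
    refine Asymptotics.IsBigO.of_bound q (Eventually.of_forall fun u => ?_)
    simpa using hb u
  have hmd : ∀ s : ℂ, 0 < s.re → DifferentiableAt ℂ (mellin (PS χ)) (-s) := by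
    intro s hs
    refine mellin_differentiableAt_of_isBigO_rpow (a := 0) (b := -s.re - 1) hloc htop (by simpa) ?_
      (by simp)
    refine Asymptotics.IsBigO.of_bound 1 ?_
    have : Iio (1:ℝ) ∈ 𝓝[>] (0:ℝ) := mem_nhdsWithin_of_mem_nhds (Iio_mem_nhds one_pos)
    filter_upwards [this] with u hu
    rw [PS_zero χ hu]; simp
  have hmel : ∀ s : ℂ, mellin (PS χ) (-s) = ∫ u in Ioi (1:ℝ), PS χ u * (u:ℂ) ^ (-(s + 1)) := by
    intro s
    rw [mellin, ← integral_Ici_eq_integral_Ioi (x := (1:ℝ)),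
      ← setIntegral_eq_of_subset_of_forall_sdiff_eq_zero (s := Ici (1:ℝ)) (t := Ioi (0:ℝ)) measurableSet_Ioi
      (fun u hu => lt_of_lt_of_le (zero_lt_one (α := ℝ)) hu)]
    · refine setIntegral_congr_fun measurableSet_Ioi fun u _ => ?_
      simp only [smul_eq_mul]
      rw [mul_comm]; congr 2; ring
    · intro u hu
      have : u < 1 := not_le.mp hu.2
      simp [PS_zero χ this]
  have hEq : EqOn (LFunction χ) (fun s => s * mellin (PS χ) (-s)) {s : ℂ | 0 < s.re} := by
    have hopen : IsOpen {s : ℂ | 0 < s.re} := isOpen_lt continuous_const continuous_re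
    refine AnalyticOnNhd.eqOn_of_preconnected_of_eventuallyEq (𝕜 := ℂ) (z₀ := 2)
      ((differentiable_LFunction hχ).differentiableOn.analyticOnNhd hopen) ?_
      (convex_halfSpace_re_gt 0).isPreconnected (by simp) ?_
    · refine DifferentiableOn.analyticOnNhd (fun s hs => ?_) hopen
      have := hmd s hs
      have h2 : DifferentiableAt ℂ (fun s => mellin (PS χ) (-s)) s :=
        DifferentiableAt.comp (g := mellin (PS χ)) s this differentiable_neg.differentiableAt
      exact (differentiableAt_id.mul h2).differentiableWithinAt
    · have : {s : ℂ | 1 < s.re} ∈ 𝓝 (2:ℂ) :=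
        (isOpen_lt continuous_const continuous_re).mem_nhds (by simp)
      filter_upwards [this] with s hs
      have hs' : 1 < s.re := hs
      rw [LFunction_eq_LSeries χ hs, LSeries_eq_mul_integral _ (r := 0) le_rfl (by linarith)
        (LSeriesSummable_of_one_lt_re χ hs), hmel]
      · rfl
      · refine Asymptotics.IsBigO.of_bound q (Eventually.of_forall fun n => ?_)
        simpa using char_sum_bound hq χ hχ n
  have hs0 : 0 < s.re := by linarith
  rw [hEq hs0]
  simp only [norm_mul]
  have hI : ‖mellin (PS χ) (-s)‖ ≤ 2 * q := by
    rw [hmel]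
    have h1 : ∀ u ∈ Ioi (1:ℝ), ‖PS χ u * (u:ℂ) ^ (-(s + 1))‖ ≤ q * u ^ (-(s.re + 1)) := by
      intro u hu
      have hu' : (0:ℝ) < u := lt_trans one_pos hu
      rw [norm_mul, norm_cpow_eq_rpow_re_of_pos hu']
      simp only [neg_re, add_re, one_re]
      gcongr
      exact hb u
    have h2 : IntegrableOn (fun u : ℝ => q * u ^ (-(s.re + 1))) (Ioi (1:ℝ)) :=
      (integrableOn_Ioi_rpow_of_lt (by linarith) one_pos).const_mul _
    refine (norm_integral_le_of_norm_le h2 ((ae_restrict_iff' measurableSet_Ioi).mpr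
      (Eventually.of_forall h1))).trans ?_
    rw [integral_const_mul, integral_Ioi_rpow_of_lt (by linarith) one_pos]
    simp only [Real.one_rpow]
    have : -1 / (-(s.re + 1) + 1) = 1 / s.re := by
      rw [show -(s.re + 1) + 1 = -s.re by ring, neg_div_neg_eq]
    rw [this, mul_comm]
    gcongr
    rw [div_le_iff₀ hs0]; linarith
  calc ‖s‖ * ‖mellin (PS χ) (-s)‖ ≤ ‖s‖ * (2 * q) := by gcongr
    _ = _ := by ring


lemma Gammaℝ_conj' (s : ℂ) : Gammaℝ (conj s) = conj (Gammaℝ s) := by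
  rw [Gammaℝ_def, Gammaℝ_def, map_mul, ← Gamma_conj, map_div₀, Complex.conj_ofNat]
  congr 1
  have h := conj_cpow (Real.pi : ℂ) (conj (-s / 2)) ?_
  · rw [conj_ofReal, Complex.conj_conj, map_div₀, map_neg, Complex.conj_ofNat] at h
    exact h
  · rw [arg_ofReal_of_nonneg Real.pi_pos.le]
    exact Real.pi_pos.ne

lemma gammaFactor_conj {q : ℕ} (χ : DirichletCharacter ℂ q) (s : ℂ) :
    gammaFactor χ⁻¹ s = conj (gammaFactor χ (conj s)) := by
  have hinv : ∀ a, χ⁻¹ a = conj (χ a) := fun a => (MulChar.star_apply' χ a).symm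
  rcases χ.even_or_odd with h | h
  · have h' : χ⁻¹.Even := by
      have h2 : χ (-1) = 1 := h
      show χ⁻¹ (-1) = 1
      rw [hinv, h2, map_one]
    rw [h.gammaFactor_def, h'.gammaFactor_def, Gammaℝ_conj', Complex.conj_conj]
  · have h' : χ⁻¹.Odd := by
      have h2 : χ (-1) = -1 := h
      show χ⁻¹ (-1) = -1
      rw [hinv, h2, map_neg, map_one]
    rw [h.gammaFactor_def, h'.gammaFactor_def, ← Gammaℝ_conj']
    simp

lemma gammaFactor_ne_zero {q : ℕ} (χ : DirichletCharacter ℂ q) {s : ℂ} (hs : 0 < s.re) :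
    gammaFactor χ s ≠ 0 := by
  rcases χ.even_or_odd with h | h
  · rw [h.gammaFactor_def]; exact Gammaℝ_ne_zero_of_re_pos hs
  · rw [h.gammaFactor_def]; exact Gammaℝ_ne_zero_of_re_pos (by simp; linarith)

lemma completed_eq {q : ℕ} [NeZero q] (hq : 1 < q) (χ : DirichletCharacter ℂ q) {s : ℂ}
    (hs : 0 < s.re) : completedLFunction χ s = gammaFactor χ s * LFunction χ s := by
  rw [LFunction_eq_completed_div_gammaFactor χ s (Or.inr hq.ne')]
  field_simp [gammaFactor_ne_zero χ hs]

lemma completed_conj {q : ℕ} [NeZero q] (hq : 1 < q) (χ : DirichletCharacter ℂ q) (hχ : χ ≠ 1)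
    (s : ℂ) : completedLFunction χ⁻¹ s = conj (completedLFunction χ (conj s)) := by
  have hinv : ∀ a, χ⁻¹ a = conj (χ a) := fun a => (MulChar.star_apply' χ a).symm
  have hχ' : χ⁻¹ ≠ 1 := inv_ne_one.mpr hχ
  have hD : Differentiable ℂ (fun s => conj (completedLFunction χ (conj s))) := by
    intro s
    have := (differentiable_completedLFunction hχ (conj s)).conj_conj
    simpa [Function.comp_def] using this
  have := AnalyticOnNhd.eq_of_eventuallyEq (𝕜 := ℂ) (z₀ := 2)
    ((differentiable_completedLFunction hχ').differentiableOn.analyticOnNhd isOpen_univ)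
    (hD.differentiableOn.analyticOnNhd isOpen_univ) ?_
  · exact congrFun this s
  · have : {s : ℂ | 1 < s.re} ∈ 𝓝 (2:ℂ) :=
        (isOpen_lt continuous_const continuous_re).mem_nhds (by simp)
    filter_upwards [this] with s hs
    have hs' : 1 < s.re := hs
    have hs2 : 1 < (conj s).re := by simpa using hs'
    rw [completed_eq hq _ (by linarith), completed_eq hq _ (by linarith), map_mul, gammaFactor_conj,
      LFunction_eq_LSeries _ hs, LFunction_eq_LSeries _ hs2]
    congr 1
    rw [LSeries, LSeries, Complex.conj_tsum]
    refine tsum_congr fun n => ?_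
    rw [LSeries.term_def, LSeries.term_def]
    split_ifs with hn
    · simp
    · rw [map_div₀, ← hinv, ← conj_cpow, Complex.conj_natCast]
      rw [natCast_arg]; exact Real.pi_pos.ne

noncomputable def GG {q : ℕ} [NeZero q] (χ : DirichletCharacter ℂ q) (z : ℂ) : ℂ :=
  exp (z * (Real.log q / 2 : ℝ)) * completedLFunction χ (1 / 2 + z)

lemma GG_symm {q : ℕ} [NeZero q] (hq : 1 < q) (χ : DirichletCharacter ℂ q) (hχ : χ ≠ 1)
    (hp : χ.IsPrimitive) (x y : ℝ) : ‖GG χ (-x + y * I)‖ = ‖GG χ (x + y * I)‖ := by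
  have hq0 : (0:ℝ) < q := by positivity
  have hN : ∀ s : ℂ, ‖(q:ℂ) ^ s‖ = (q:ℝ) ^ s.re := fun s => by
    rw [← ofReal_natCast, norm_cpow_eq_rpow_re_of_pos hq0]
  have hfe : ∀ s : ℂ, ‖completedLFunction χ (1 - s)‖ =
      (q:ℝ) ^ (s.re - 1/2) * ‖rootNumber χ‖ * ‖completedLFunction χ (conj s)‖ := by
    intro s
    rw [hp.completedLFunction_one_sub, completed_conj hq χ hχ, norm_mul, norm_mul, hN, norm_conj]
    simp
  have hroot : ‖rootNumber χ‖ = 1 := by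
    have h1 := hfe 2
    have h2 := hfe (-1)
    have e1 : conj (2:ℂ) = 2 := Complex.conj_ofNat 2
    have e2 : conj (-1:ℂ) = 1 - 2 := by simp; norm_num
    have e3 : (1:ℂ) - -1 = 2 := by norm_num
    rw [e1] at h1
    rw [e2, e3, h1] at h2
    have h3 : ‖completedLFunction χ 2‖ ≠ 0 := by
      rw [norm_ne_zero_iff, completed_eq hq χ (by simp)]
      exact mul_ne_zero (gammaFactor_ne_zero χ (by simp))
        (LFunction_ne_zero_of_one_le_re χ (Or.inl hχ) (by simp))
    have h4 : (q:ℝ) ^ ((-1:ℂ).re - 1/2) * (q:ℝ) ^ ((2:ℂ).re - 1/2) = 1 := by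
      rw [← Real.rpow_add hq0]; simp; norm_num
    have h5 : ‖rootNumber χ‖ ^ 2 = 1 := by
      have : ‖completedLFunction χ 2‖ * (‖rootNumber χ‖ ^ 2) = ‖completedLFunction χ 2‖ * 1 := by
        calc _ = ((q:ℝ) ^ ((-1:ℂ).re - 1/2) * (q:ℝ) ^ ((2:ℂ).re - 1/2)) *
              (‖completedLFunction χ 2‖ * (‖rootNumber χ‖ ^ 2)) := by rw [h4, one_mul]
          _ = _ := by rw [mul_one]; exact Eq.trans (by ring) h2.symm
      exact mul_left_cancel₀ h3 this
    nlinarith [norm_nonneg (rootNumber χ)]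
  have h := hfe (1/2 + x - y * I)
  have e1 : 1 - (1/2 + (x:ℂ) - y * I) = 1/2 + (-x + y * I) := by ring
  have e2 : conj (1/2 + (x:ℂ) - y * I) = 1/2 + (x + y * I) := by
    simp [Complex.conj_ofNat]; ring
  rw [e1, e2, hroot, mul_one] at h
  rw [GG, GG, norm_mul, norm_mul, h, norm_exp, norm_exp, re_mul_ofReal, re_mul_ofReal, ← mul_assoc,
    Real.rpow_def_of_pos hq0, ← Real.exp_add]
  congr 2
  simp
  ring

end Stmt6

namespace Stmt6
open Complex Metric Set Filter Topology MeasureTheory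
open DirichletCharacter
open scoped ComplexConjugate

lemma norm_Gammaℝ_le {s : ℂ} {n : ℕ} (hs : 1 / 2 ≤ s.re) (hn : s.re ≤ 2 * (n + 1)) :
    ‖Gammaℝ s‖ ≤ Real.Gamma (1/4) + (n.factorial : ℝ) := by
  have h0 : 0 < (s / 2).re := by simp; linarith
  have hre : (s / 2).re = s.re / 2 := by simp
  rw [Gammaℝ_def, norm_mul, norm_cpow_eq_rpow_re_of_pos Real.pi_pos]
  have h1 : Real.pi ^ (-s / 2).re ≤ 1 := by
    apply Real.rpow_le_one_of_one_le_of_nonpos (by linarith [Real.two_le_pi])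
    simp; linarith
  have h2 := norm_Gamma_le h0
  have h3 : Real.Gamma (s / 2).re ≤ max (Real.Gamma (1/4)) (Real.Gamma (n + 1)) := by
    refine Real.convexOn_Gamma.le_max_of_mem_Icc (x := (1/4:ℝ)) (y := (n:ℝ) + 1) ?_ ?_ ?_
    · simp
    · simp; positivity
    · rw [hre]; constructor <;> linarith
  rw [Real.Gamma_nat_eq_factorial] at h3
  have h4 : 0 < Real.Gamma (1/4) := Real.Gamma_pos_of_pos (by norm_num)
  have h5 : (0:ℝ) ≤ n.factorial := by positivity
  have h6 : max (Real.Gamma (1/4)) (n.factorial : ℝ) ≤ Real.Gamma (1/4) + (n.factorial : ℝ) :=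
    max_le (by linarith) (by linarith)
  calc _ ≤ 1 * ‖Gamma (s / 2)‖ := by gcongr
    _ ≤ _ := by linarith

lemma GG_growth {q : ℕ} [NeZero q] (hq : 1 < q) (χ : DirichletCharacter ℂ q) (hχ : χ ≠ 1)
    (hp : χ.IsPrimitive) : ∃ A : ℝ, 0 ≤ A ∧ ∀ R : ℝ, 1 ≤ R → ∀ z : ℂ, ‖z‖ ≤ R →
      ‖GG χ z‖ ≤ Real.exp (A * ((R + 3) * Real.sqrt (R + 3))) := by
  set K := Real.Gamma (1/4) with hK
  have hK0 : 0 < K := Real.Gamma_pos_of_pos (by norm_num)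
  have hq1 : (1:ℝ) < q := by exact_mod_cast hq
  have hlq : 0 < Real.log q := Real.log_pos hq1
  refine ⟨Real.log q + K + 2 + 2 * q, by positivity, fun R hR z hz => ?_⟩
  wlog hzre : 0 ≤ z.re generalizing z with H
  · have h1 := GG_symm hq χ hχ hp (-z.re) z.im
    have e1 : (-((-z.re : ℝ) : ℂ) + z.im * I) = z := by
      rw [ofReal_neg, neg_neg, re_add_im]
    rw [e1] at h1
    rw [h1]
    refine H _ ?_ ?_
    · refine le_trans (le_of_eq ?_) hz
      rw [← sq_eq_sq₀ (norm_nonneg _) (norm_nonneg _), Complex.sq_norm, Complex.sq_norm,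
        normSq_apply, normSq_apply]
      simp
    · simp; linarith
  · set n := ⌈R⌉₊ + 1 with hn
    have hnR : (n:ℝ) ≤ R + 3 := by
      have := (Nat.ceil_lt_add_one (by linarith : 0 ≤ R)).le
      rw [hn]; push_cast; linarith
    have hRn : R ≤ n := by
      have := Nat.le_ceil R
      rw [hn]; push_cast; linarith
    have hzR : z.re ≤ R := (re_le_norm z).trans hz
    have hs : 1/2 ≤ (1/2 + z).re := by simp; linarith
    have hsre : (1/2 + z).re = 1/2 + z.re := by simp
    have hL := LFunction_bound hq χ hχ hs
    have hsn : ‖1/2 + z‖ ≤ R + 1 := by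
      refine (norm_add_le _ _).trans ?_
      have : ‖(1/2:ℂ)‖ = 1/2 := by simp
      rw [this]; linarith
    have hg : ‖gammaFactor χ (1/2 + z)‖ ≤ K + n.factorial := by
      rcases χ.even_or_odd with h | h
      · rw [h.gammaFactor_def]
        exact norm_Gammaℝ_le hs (by rw [hsre]; linarith)
      · rw [h.gammaFactor_def]
        exact norm_Gammaℝ_le (by simp; linarith) (by simp; linarith)
    have hn1 : (1:ℝ) ≤ n := by rw [hn]; push_cast; linarith [(Nat.cast_nonneg ⌈R⌉₊ : (0:ℝ) ≤ _)]
    have hfac : (n.factorial : ℝ) ≤ Real.exp (2 * ((R + 3) * Real.sqrt (R + 3))) := by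
      have h1 : (n.factorial : ℝ) ≤ (n:ℝ) ^ n := by exact_mod_cast Nat.factorial_le_pow n
      refine h1.trans ?_
      rw [← Real.rpow_natCast, Real.rpow_def_of_pos (by linarith), Real.exp_le_exp]
      have h2 : Real.log n ≤ 2 * Real.sqrt (R + 3) := by
        have h3 : Real.log n ≤ Real.log (R + 3) := Real.log_le_log (by linarith) hnR
        have h4 : Real.log (R + 3) = 2 * Real.log (Real.sqrt (R + 3)) := by
          rw [Real.log_sqrt (by linarith)]; ring
        have h5 := Real.log_le_sub_one_of_pos (Real.sqrt_pos.mpr (by linarith : 0 < R + 3))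
        linarith
      calc Real.log n * n ≤ (2 * Real.sqrt (R + 3)) * (R + 3) := by gcongr
        _ = _ := by ring
    set T := (R + 3) * Real.sqrt (R + 3) with hT
    have hs1 : 1 ≤ Real.sqrt (R + 3) := by
      rw [Real.one_le_sqrt]; linarith
    have hTR : R + 3 ≤ T := by rw [hT]; nlinarith
    have hexp : ‖exp (z * (Real.log q / 2 : ℝ))‖ ≤ Real.exp (Real.log q * T) := by
      rw [norm_exp, re_mul_ofReal, Real.exp_le_exp]
      nlinarith
    have h1e : 1 ≤ Real.exp (2 * T) := Real.one_le_exp (by linarith)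
    have hKf : K + n.factorial ≤ Real.exp (K * T) * Real.exp (2 * T) := by
      have h2 : K + 1 ≤ Real.exp (K * T) := by
        refine (Real.add_one_le_exp K).trans ?_
        rw [Real.exp_le_exp]; nlinarith
      nlinarith
    have hLe : ‖LFunction χ (1/2 + z)‖ ≤ Real.exp (2 * q * T) := by
      refine hL.trans ?_
      have : 2 * (q:ℝ) * ‖1/2 + z‖ ≤ 2 * q * T := by gcongr; linarith
      linarith [Real.add_one_le_exp (2 * q * T)]
    rw [GG, norm_mul, completed_eq hq χ (by linarith), norm_mul]
    calc _ ≤ Real.exp (Real.log q * T) * ((Real.exp (K * T) * Real.exp (2 * T)) *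
          Real.exp (2 * q * T)) := by
          gcongr
          exact hg.trans hKf
      _ = _ := by
          rw [← Real.exp_add, ← Real.exp_add, ← Real.exp_add]; congr 1; ring

lemma LFunction_ne_zero' {q : ℕ} [NeZero q] (χ : DirichletCharacter ℂ q) (hχ : χ ≠ 1)
    (hRH : ∀ s : ℂ, 0 < s.re → s.re < 1 → LFunction χ s = 0 → s.re = 1 / 2)
    {s : ℂ} (hs : 1/2 < s.re) : LFunction χ s ≠ 0 := by
  intro h
  rcases lt_or_ge s.re 1 with h1 | h1
  · linarith [hRH s (by linarith) h1 h]
  · exact LFunction_ne_zero_of_one_le_re χ (Or.inl hχ) h1 h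

/-- absolute lower bound for the real part of the logarithmic derivative. -/
lemma re_logDeriv_L : ∃ C : ℝ, 0 ≤ C ∧ ∀ (q : ℕ) [NeZero q], 1 < q →
    ∀ χ : DirichletCharacter ℂ q, χ ≠ 1 → χ.IsPrimitive →
    (∀ s : ℂ, 0 < s.re → s.re < 1 → LFunction χ s = 0 → s.re = 1 / 2) →
    ∀ s : ℂ, 1/2 < s.re →
    0 ≤ (logDeriv (LFunction χ) s).re + Real.log q / 2 + Real.log ‖s + 1‖ / 2 + C := by
  obtain ⟨C, hC0, hC⟩ := logDeriv_Gammaℝ_bound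
  refine ⟨C, hC0, fun q _ hq χ hχ hp hRH s hs => ?_⟩
  have hGd : Differentiable ℂ (GG χ) := by
    unfold GG
    have h1 := differentiable_completedLFunction hχ
    have h2 : Differentiable ℂ (fun z : ℂ => completedLFunction χ (1/2 + z)) :=
      h1.comp (differentiable_id.const_add _)
    fun_prop
  have hpos : ∀ z : ℂ, 0 < z.re → GG χ z ≠ 0 := by
    intro z hz
    have : 1/2 < (1/2 + z).re := by simp; linarith
    rw [GG, completed_eq hq χ (by linarith)]
    exact mul_ne_zero (exp_ne_zero _) (mul_ne_zero (gammaFactor_ne_zero χ (by linarith))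
      (LFunction_ne_zero' χ hχ hRH this))
  have hz : ∀ z, GG χ z = 0 → z.re = 0 := by
    intro z hz
    rcases lt_trichotomy z.re 0 with h | h | h
    · exfalso
      have h1 := GG_symm hq χ hχ hp (-z.re) z.im
      have e1 : (-((-z.re : ℝ) : ℂ) + z.im * I) = z := by
        rw [ofReal_neg, neg_neg, re_add_im]
      rw [e1, hz, norm_zero] at h1
      exact hpos _ (by simp; linarith) (norm_eq_zero.mp h1.symm)
    · exact h
    · exact absurd hz (hpos z h)
  obtain ⟨A, hA0, hA⟩ := GG_growth hq χ hχ hp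
  have hM : Tendsto (fun R : ℝ => (A * ((R + 3) * Real.sqrt (R + 3))) / R ^ 2) atTop (𝓝 0) := by
    have h1 : Tendsto (fun R : ℝ => A * 4 / Real.sqrt R) atTop (𝓝 0) :=
      tendsto_const_nhds.div_atTop Real.tendsto_sqrt_atTop
    refine squeeze_zero' ?_ ?_ h1
    · filter_upwards [eventually_ge_atTop 3] with R hR
      positivity
    · filter_upwards [eventually_ge_atTop 3] with R hR
      have h2 : Real.sqrt (R + 3) ≤ 2 * Real.sqrt R := by
        rw [Real.sqrt_le_left (by positivity), mul_pow, Real.sq_sqrt (by linarith)]; linarith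
      have h3 : R = Real.sqrt R * Real.sqrt R := (Real.mul_self_sqrt (by linarith)).symm
      have h4 : 0 < Real.sqrt R := Real.sqrt_pos.mpr (by linarith)
      rw [div_le_div_iff₀ (by positivity) h4]
      calc A * ((R + 3) * Real.sqrt (R + 3)) * Real.sqrt R
          ≤ A * ((2 * R) * (2 * Real.sqrt R)) * Real.sqrt R := by gcongr; linarith
        _ = A * 4 * (R * (Real.sqrt R * Real.sqrt R)) := by ring
        _ = A * 4 * R ^ 2 := by rw [← h3]; ring
  have hmain := re_logDeriv_nonneg hGd (GG_symm hq χ hχ hp) hz hM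
    (by filter_upwards [eventually_ge_atTop 1] with R hR using hA R hR)
    (z := s - 1/2) (by simp; linarith)
  have hsp : 0 < s.re := by linarith
  have hev : GG χ =ᶠ[𝓝 (s - 1/2)] fun z => exp (z * (Real.log q / 2 : ℝ)) *
      (gammaFactor χ (1/2 + z) * LFunction χ (1/2 + z)) := by
    have : {z : ℂ | 0 < z.re} ∈ 𝓝 (s - 1/2) :=
      (isOpen_lt continuous_const continuous_re).mem_nhds (by simp; linarith)
    filter_upwards [this] with z hz
    have hz' : 0 < z.re := hz
    rw [GG, completed_eq hq χ (by simp; linarith)]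
  have hgd : DifferentiableAt ℂ (gammaFactor χ) s := by
    have key : ∀ w : ℂ, 0 < w.re → DifferentiableAt ℂ Gammaℝ w := by
      intro w hw
      have := (differentiable_Gammaℝ_inv w).inv (inv_ne_zero (Gammaℝ_ne_zero_of_re_pos hw))
      simpa [Pi.inv_def] using this
    rcases χ.even_or_odd with h | h
    · rw [show gammaFactor χ = Gammaℝ from funext h.gammaFactor_def]; exact key s hsp
    · rw [show gammaFactor χ = fun s => Gammaℝ (s + 1) from funext h.gammaFactor_def]
      exact DifferentiableAt.comp (g := Gammaℝ) s (key (s + 1) (by simp; linarith))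
        (differentiableAt_id.add_const 1)
  have hgb : (logDeriv (gammaFactor χ) s).re ≤ Real.log ‖s + 1‖ / 2 + C := by
    rcases χ.even_or_odd with h | h
    · rw [show gammaFactor χ = Gammaℝ from funext h.gammaFactor_def]; exact (hC s hs.le).1
    · rw [show gammaFactor χ = fun s => Gammaℝ (s + 1) from funext h.gammaFactor_def]
      exact (hC s hs.le).2
  have hld : logDeriv (GG χ) (s - 1/2) = (Real.log q / 2 : ℝ) +
      (logDeriv (gammaFactor χ) s + logDeriv (LFunction χ) s) := by
    have hLd := differentiable_LFunction hχ s
    have hL0 := LFunction_ne_zero' χ hχ hRH hs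
    have hg0 := gammaFactor_ne_zero χ hsp
    have e : 1/2 + (s - 1/2) = s := by ring
    have hin : HasDerivAt (fun z : ℂ => 1/2 + z) 1 (s - 1/2) := (hasDerivAt_id _).const_add _
    have h1 : HasDerivAt (fun z : ℂ => exp (z * (Real.log q / 2 : ℝ)))
        (exp ((s - 1/2) * (Real.log q / 2 : ℝ)) * (1 * (Real.log q / 2 : ℝ))) (s - 1/2) :=
      ((hasDerivAt_id _).mul_const _).cexp
    have h2 : HasDerivAt (fun z : ℂ => gammaFactor χ (1/2 + z))
        (deriv (gammaFactor χ) s * 1) (s - 1/2) :=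
      HasDerivAt.comp (h₂ := gammaFactor χ) _ (by rw [e]; exact hgd.hasDerivAt) hin
    have h3 : HasDerivAt (fun z : ℂ => LFunction χ (1/2 + z))
        (deriv (LFunction χ) s * 1) (s - 1/2) :=
      HasDerivAt.comp (h₂ := LFunction χ) _ (by rw [e]; exact hLd.hasDerivAt) hin
    rw [logDeriv_apply, hev.deriv_eq, hev.eq_of_nhds, (h1.fun_mul (h2.fun_mul h3)).deriv, e,
      logDeriv_apply, logDeriv_apply]
    have h0 := exp_ne_zero ((s - 1/2) * (Real.log q / 2 : ℝ))
    field_simp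
  rw [hld, add_re, add_re, ofReal_re] at hmain
  linarith

end Stmt6

namespace Stmt6
open Complex Metric Set Filter Topology MeasureTheory

lemma rpow_three_half {r : ℝ} (hr : 0 < r) : r ^ (-(3/2):ℝ) = √r / r ^ 2 := by
  rw [Real.sqrt_eq_rpow, ← Real.rpow_natCast, ← Real.rpow_sub hr]; norm_num

lemma strip_bound {H : ℂ → ℂ} {b c C R0 : ℝ} (hc : ContinuousOn H {s | b ≤ s.re ∧ s.re ≤ c})
    (hb : ∀ s : ℂ, b ≤ s.re → s.re ≤ c → R0 ≤ ‖s‖ → ‖H s‖ * ‖s‖ ^ 2 ≤ C * √‖s‖) :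
    ∃ C' : ℝ, 0 ≤ C' ∧ ∀ s : ℂ, b ≤ s.re → s.re ≤ c → ‖H s‖ ≤ C' * (1 + |s.im|) ^ (-(3/2):ℝ) := by
  set R := max R0 1
  have hR1 : 1 ≤ R := le_max_right _ _
  have hclosed : IsClosed {s : ℂ | b ≤ s.re ∧ s.re ≤ c} :=
    (isClosed_le continuous_const continuous_re).inter (isClosed_le continuous_re continuous_const)
  have hcomp : IsCompact ({s : ℂ | b ≤ s.re ∧ s.re ≤ c} ∩ closedBall 0 R) :=
    (isCompact_closedBall 0 R).inter_left hclosed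
  obtain ⟨B, hB⟩ := hcomp.exists_bound_of_continuousOn (hc.mono inter_subset_left)
  have hpow : ∀ s : ℂ, 0 < (1 + |s.im|) ^ (-(3/2):ℝ) := fun s => by positivity
  refine ⟨|B| * (1 + R) ^ (3/2:ℝ) + |C| * 2 ^ (3/2:ℝ), by positivity, fun s h1 h2 => ?_⟩
  rcases le_total ‖s‖ R with h | h
  · have h3 := hB s ⟨⟨h1, h2⟩, by simpa using h⟩
    have h4 : (1 + R) ^ (-(3/2):ℝ) ≤ (1 + |s.im|) ^ (-(3/2):ℝ) := by
      apply Real.rpow_le_rpow_of_nonpos (by positivity) _ (by norm_num)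
      linarith [abs_im_le_norm s]
    have h5 : (1 + R) ^ (3/2:ℝ) * (1 + R) ^ (-(3/2):ℝ) = 1 := by
      rw [← Real.rpow_add (by positivity)]; norm_num
    calc ‖H s‖ ≤ |B| := h3.trans (le_abs_self B)
      _ = |B| * ((1 + R) ^ (3/2:ℝ) * (1 + R) ^ (-(3/2):ℝ)) := by rw [h5, mul_one]
      _ ≤ |B| * ((1 + R) ^ (3/2:ℝ) * (1 + |s.im|) ^ (-(3/2):ℝ)) := by gcongr
      _ = |B| * (1 + R) ^ (3/2:ℝ) * (1 + |s.im|) ^ (-(3/2):ℝ) := by ring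
      _ ≤ _ := by
        have := hpow s
        gcongr
        have : 0 ≤ |C| * 2 ^ (3/2:ℝ) := by positivity
        linarith
  · have hs : 0 < ‖s‖ := by linarith
    have h3 := hb s h1 h2 ((le_max_left _ _).trans h)
    have h4 : ‖H s‖ ≤ C * ‖s‖ ^ (-(3/2):ℝ) := by
      rw [rpow_three_half hs, ← mul_div_assoc, le_div_iff₀ (by positivity)]; exact h3
    have h5 : ‖s‖ ^ (-(3/2):ℝ) ≤ 2 ^ (3/2:ℝ) * (1 + |s.im|) ^ (-(3/2):ℝ) := by
      have e : (2:ℝ) ^ (3/2:ℝ) = (1/2:ℝ) ^ (-(3/2):ℝ) := by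
        rw [one_div, Real.inv_rpow (by norm_num), ← Real.rpow_neg (by norm_num), neg_neg]
      rw [e, ← Real.mul_rpow (by norm_num) (by positivity)]
      apply Real.rpow_le_rpow_of_nonpos (by positivity) _ (by norm_num)
      linarith [abs_im_le_norm s]
    calc ‖H s‖ ≤ C * ‖s‖ ^ (-(3/2):ℝ) := h4
      _ ≤ |C| * ‖s‖ ^ (-(3/2):ℝ) := by gcongr; exact le_abs_self C
      _ ≤ |C| * (2 ^ (3/2:ℝ) * (1 + |s.im|) ^ (-(3/2):ℝ)) := by gcongr
      _ = |C| * 2 ^ (3/2:ℝ) * (1 + |s.im|) ^ (-(3/2):ℝ) := by ring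
      _ ≤ _ := by
        have := hpow s
        gcongr
        have : 0 ≤ |B| * (1 + R) ^ (3/2:ℝ) := by positivity
        linarith

lemma integrable_decay : Integrable (fun v : ℝ => (1 + |v|) ^ (-(3/2):ℝ)) := by
  have := integrable_one_add_norm (E := ℝ) (μ := volume) (r := 3/2) (by simp; norm_num)
  simpa using this

lemma line_integrable {H : ℂ → ℂ} {b c a C R0 : ℝ} (hba : b ≤ a) (hac : a ≤ c)
    (hc : ContinuousOn H {s | b ≤ s.re ∧ s.re ≤ c})
    (hb : ∀ s : ℂ, b ≤ s.re → s.re ≤ c → R0 ≤ ‖s‖ → ‖H s‖ * ‖s‖ ^ 2 ≤ C * √‖s‖) :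
    Integrable (fun v : ℝ => H (a + v * I)) := by
  obtain ⟨C', hC0, hC'⟩ := strip_bound hc hb
  have hcont : Continuous (fun v : ℝ => H (a + v * I)) := by
    refine hc.comp_continuous (by fun_prop) fun v => ?_
    simp [hba, hac]
  refine (integrable_decay.const_mul C').mono' hcont.aestronglyMeasurable
    (Eventually.of_forall fun v => ?_)
  simpa using hC' (a + v * I) (by simpa) (by simpa)

lemma strip_shift {H : ℂ → ℂ} {b c C R0 : ℝ} (hbc : b ≤ c)
    (hd : DifferentiableOn ℂ H {s | b ≤ s.re ∧ s.re ≤ c})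
    (hb : ∀ s : ℂ, b ≤ s.re → s.re ≤ c → R0 ≤ ‖s‖ → ‖H s‖ * ‖s‖ ^ 2 ≤ C * √‖s‖) :
    ∫ v : ℝ, H (b + v * I) = ∫ v : ℝ, H (c + v * I) := by
  have ib := line_integrable le_rfl hbc hd.continuousOn hb
  have ic := line_integrable hbc le_rfl hd.continuousOn hb
  obtain ⟨C', hC0, hC'⟩ := strip_bound hd.continuousOn hb
  have tb := intervalIntegral_tendsto_integral ib tendsto_neg_atTop_atBot tendsto_id
  have tc := intervalIntegral_tendsto_integral ic tendsto_neg_atTop_atBot tendsto_id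
  have hrect : ∀ T : ℝ, 0 ≤ T → ‖(∫ v in (-T)..T, H (c + v * I)) - ∫ v in (-T)..T, H (b + v * I)‖
      ≤ 2 * (C' * (1 + T) ^ (-(3/2):ℝ) * |c - b|) := by
    intro T hT
    have h := Complex.integral_boundary_rect_eq_zero_of_differentiableOn H (b + (-T:ℝ) * I)
      (c + T * I) (hd.mono fun s hs => by
        have := hs.1
        simp only [mem_preimage, add_re, ofReal_re, mul_re, I_re, mul_zero, ofReal_im, I_im,
          mul_one, sub_self, add_zero, uIcc_of_le hbc] at this
        exact this)
    simp only [add_re, ofReal_re, mul_re, I_re, mul_zero, ofReal_im, I_im, mul_one, sub_self,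
      add_zero, add_im, mul_im, zero_add, smul_eq_mul] at h
    have hh : ∀ y : ℝ, |y| = T → ‖∫ x in b..c, H (x + y * I)‖ ≤
        C' * (1 + T) ^ (-(3/2):ℝ) * |c - b| := by
      intro y hy
      refine intervalIntegral.norm_integral_le_of_norm_le_const fun x hx => ?_
      rw [uIoc_of_le hbc] at hx
      have := hC' (x + y * I) (by simpa using hx.1.le) (by simpa using hx.2)
      simpa [hy] using this
    have h1 := hh (-T) (by rw [abs_neg, abs_of_nonneg hT])
    have h2 := hh T (abs_of_nonneg hT)
    have e : I * ((∫ v in (-T)..T, H (c + v * I)) - ∫ v in (-T)..T, H (b + v * I)) =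
        (∫ x in b..c, H (x + T * I)) - ∫ x in b..c, H (x + (-T:ℝ) * I) := by
      linear_combination h
    calc _ = ‖I * ((∫ v in (-T)..T, H (c + v * I)) - ∫ v in (-T)..T, H (b + v * I))‖ := by
            rw [norm_mul, norm_I, one_mul]
      _ ≤ _ := by rw [e]; exact (norm_sub_le _ _).trans (by linarith)
  have hz : Tendsto (fun T : ℝ => 2 * (C' * (1 + T) ^ (-(3/2):ℝ) * |c - b|)) atTop (𝓝 0) := by
    have h1 : Tendsto (fun T : ℝ => (1 + T) ^ (-(3/2):ℝ)) atTop (𝓝 0) :=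
      (tendsto_rpow_neg_atTop (by norm_num)).comp (tendsto_atTop_add_const_left _ _ tendsto_id)
    simpa using ((h1.const_mul C').mul_const |c - b|).const_mul 2
  have h0 : Tendsto (fun T : ℝ => (∫ v in (-T)..T, H (c + v * I)) - ∫ v in (-T)..T, H (b + v * I))
      atTop (𝓝 0) := squeeze_zero_norm'
      (by filter_upwards [eventually_ge_atTop 0] with T hT using hrect T hT) hz
  have h1 := tendsto_nhds_unique h0 (tc.sub tb)
  exact (sub_eq_zero.mp h1.symm).symm

lemma halfplane_zero {H : ℂ → ℂ} {b C R0 : ℝ}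
    (hd : DifferentiableOn ℂ H {s | b ≤ s.re})
    (hb : ∀ s : ℂ, b ≤ s.re → R0 ≤ ‖s‖ → ‖H s‖ * ‖s‖ ^ 2 ≤ C * √‖s‖) :
    ∫ v : ℝ, H (b + v * I) = 0 := by
  have hC : ∀ c : ℝ, max b (max R0 1) ≤ c → ‖∫ v : ℝ, H (b + v * I)‖ ≤
      c ^ (-(1/4):ℝ) * (|C| * ∫ v : ℝ, (1 + ‖v‖ ^ 2) ^ (-(5/4)/2:ℝ)) := by
    intro c hc
    have hbc : b ≤ c := (le_max_left _ _).trans hc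
    have hRc : R0 ≤ c := ((le_max_left _ _).trans (le_max_right _ _)).trans hc
    have h1c : 1 ≤ c := ((le_max_right _ _).trans (le_max_right _ _)).trans hc
    rw [strip_shift hbc (hd.mono fun s hs => hs.1) (fun s h1 _ h2 => hb s h1 h2)]
    have hInt : Integrable (fun v : ℝ => c ^ (-(1/4):ℝ) * (|C| * (1 + ‖v‖ ^ 2) ^ (-(5/4)/2:ℝ))) :=
      ((integrable_rpow_neg_one_add_norm_sq (by simp; norm_num)).const_mul _).const_mul _
    refine (norm_integral_le_of_norm_le hInt (Eventually.of_forall fun v => ?_)).trans ?_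
    · set s : ℂ := c + v * I with hs
      have hre : s.re = c := by simp [hs]
      have him : s.im = v := by simp [hs]
      have hns : ‖s‖ ^ 2 = c ^ 2 + v ^ 2 := by
        rw [Complex.sq_norm, normSq_apply, hre, him]; ring
      have hcs : c ≤ ‖s‖ := hre ▸ re_le_norm s
      have hs0 : 0 < ‖s‖ := by linarith
      have h3 := hb s (by rw [hre]; exact hbc) (hRc.trans hcs)
      have h4 : ‖H s‖ ≤ C * ‖s‖ ^ (-(3/2):ℝ) := by
        rw [rpow_three_half hs0, ← mul_div_assoc, le_div_iff₀ (by positivity)]; exact h3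
      have h5 : ‖s‖ ^ (-(3/2):ℝ) = ‖s‖ ^ (-(1/4):ℝ) * (‖s‖ ^ 2) ^ (-(5/4)/2:ℝ) := by
        rw [← Real.rpow_natCast, ← Real.rpow_mul hs0.le, ← Real.rpow_add hs0]; norm_num
      have h6 : ‖s‖ ^ (-(1/4):ℝ) ≤ c ^ (-(1/4):ℝ) :=
        Real.rpow_le_rpow_of_nonpos (by linarith) hcs (by norm_num)
      have h7 : (‖s‖ ^ 2) ^ (-(5/4)/2:ℝ) ≤ (1 + ‖v‖ ^ 2) ^ (-(5/4)/2:ℝ) := by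
        apply Real.rpow_le_rpow_of_nonpos (by positivity) _ (by norm_num)
        rw [hns, Real.norm_eq_abs, sq_abs]; nlinarith
      calc ‖H s‖ ≤ |C| * ‖s‖ ^ (-(3/2):ℝ) := h4.trans (by gcongr; exact le_abs_self C)
        _ = |C| * (‖s‖ ^ (-(1/4):ℝ) * (‖s‖ ^ 2) ^ (-(5/4)/2:ℝ)) := by rw [h5]
        _ ≤ |C| * (c ^ (-(1/4):ℝ) * (1 + ‖v‖ ^ 2) ^ (-(5/4)/2:ℝ)) := by gcongr
        _ = _ := by ring
    · rw [integral_const_mul, integral_const_mul]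
  have hz : Tendsto (fun c : ℝ => c ^ (-(1/4):ℝ) * (|C| * ∫ v : ℝ, (1 + ‖v‖ ^ 2) ^ (-(5/4)/2:ℝ)))
      atTop (𝓝 0) := by
    have h := (tendsto_rpow_neg_atTop (by norm_num : (0:ℝ) < 1/4)).mul_const
      (|C| * ∫ v : ℝ, (1 + ‖v‖ ^ 2) ^ (-(5/4)/2:ℝ))
    rw [zero_mul] at h
    exact h
  have := ge_of_tendsto hz (by
    filter_upwards [eventually_ge_atTop (max b (max R0 1))] with c hc using hC c hc)
  exact norm_le_zero_iff.mp this

end Stmt6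

namespace Stmt6
open Complex Metric Set Filter Topology MeasureTheory

lemma growth_div {hs : ℂ} {K : ℝ} {s p p' : ℂ} (hK : ‖hs‖ ≤ K * √(1 + ‖s‖))
    (hR : 2 * ‖p‖ + 2 * ‖p'‖ + 1 ≤ ‖s‖) :
    ‖hs / ((s - p) * (s - p'))‖ * ‖s‖ ^ 2 ≤ 8 * K * √‖s‖ := by
  have hp := norm_nonneg p
  have hp' := norm_nonneg p'
  have hs1 : 1 ≤ ‖s‖ := by linarith
  have h1 : ‖s‖ / 2 ≤ ‖s - p‖ := by linarith [norm_sub_norm_le s p]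
  have h2 : ‖s‖ / 2 ≤ ‖s - p'‖ := by linarith [norm_sub_norm_le s p']
  have h3 : √(1 + ‖s‖) ≤ 2 * √‖s‖ := by
    rw [Real.sqrt_le_left (by positivity), mul_pow, Real.sq_sqrt (by linarith)]; linarith
  have hsq : 0 < √(1 + ‖s‖) := Real.sqrt_pos.mpr (by linarith)
  have hK0 : 0 ≤ K := by
    by_contra h
    have := norm_nonneg hs
    nlinarith
  have h4 : ‖s‖ ^ 2 / 4 ≤ ‖s - p‖ * ‖s - p'‖ := by nlinarith
  rw [norm_div, norm_mul, div_mul_eq_mul_div, div_le_iff₀ (by nlinarith)]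
  calc ‖hs‖ * ‖s‖ ^ 2 ≤ (K * (2 * √‖s‖)) * ‖s‖ ^ 2 := by
        gcongr; exact hK.trans (by gcongr)
    _ = 8 * K * √‖s‖ * (‖s‖ ^ 2 / 4) := by ring
    _ ≤ _ := by gcongr

lemma sub_ne_zero_of_re {s p : ℂ} (h : s.re ≠ p.re) : s - p ≠ 0 := by
  intro h0; exact h (by rw [sub_eq_zero.mp h0])

/-- integrability on a vertical line -/
lemma line_div_integrable {h : ℂ → ℂ} {a K : ℝ} {p p' : ℂ} (hp : a ≠ p.re) (hp' : a ≠ p'.re)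
    (hc : ContinuousOn h {s | s.re = a}) (hK : ∀ s : ℂ, s.re = a → ‖h s‖ ≤ K * √(1 + ‖s‖)) :
    Integrable (fun v : ℝ => h (a + v * I) / ((a + v * I - p) * (a + v * I - p'))) := by
  refine line_integrable (H := fun s => h s / ((s - p) * (s - p'))) (b := a) (c := a)
    (C := 8 * K) (R0 := 2 * ‖p‖ + 2 * ‖p'‖ + 1) le_rfl le_rfl ?_ ?_
  · have hset : {s : ℂ | a ≤ s.re ∧ s.re ≤ a} = {s | s.re = a} := by
      ext s; simp only [mem_setOf_eq]; constructor
      · intro h; linarith [h.1, h.2]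
      · intro h; exact ⟨h.ge, h.le⟩
    rw [hset]
    refine hc.div (by fun_prop) fun s hs => ?_
    have hs' : s.re = a := hs
    exact mul_ne_zero (sub_ne_zero_of_re (hs' ▸ hp)) (sub_ne_zero_of_re (hs' ▸ hp'))
  · intro s h1 h2 h3
    exact growth_div (hK s (le_antisymm h2 h1)) h3

lemma halfplane_div_zero {h : ℂ → ℂ} {b K : ℝ} {p p' : ℂ} (hp : p.re < b) (hp' : p'.re < b)
    (hd : DifferentiableOn ℂ h {s | b ≤ s.re}) (hK : ∀ s : ℂ, b ≤ s.re → ‖h s‖ ≤ K * √(1 + ‖s‖)) :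
    ∫ v : ℝ, h (b + v * I) / ((b + v * I - p) * (b + v * I - p')) = 0 := by
  refine halfplane_zero (H := fun s => h s / ((s - p) * (s - p')))
    (C := 8 * K) (R0 := 2 * ‖p‖ + 2 * ‖p'‖ + 1) ?_ ?_
  · refine hd.div (by fun_prop) fun s hs => ?_
    have hs' : b ≤ s.re := hs
    exact mul_ne_zero (sub_ne_zero_of_re (by linarith)) (sub_ne_zero_of_re (by linarith))
  · intro s h1 h3
    exact growth_div (hK s h1) h3

lemma one_le_sqrt' (s : ℂ) : 1 ≤ √(1 + ‖s‖) := by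
  rw [Real.one_le_sqrt]; linarith [norm_nonneg s]

lemma norm_cpow_line {x : ℝ} (hx : 0 < x) (w : ℂ) : ‖(x:ℂ) ^ w‖ = x ^ w.re :=
  norm_cpow_eq_rpow_re_of_pos hx w

/-- Perron kernel, left of the pole. -/
lemma perron_left {x : ℝ} (hx : 1 ≤ x) {b : ℝ} {S : ℂ} (hb : b < S.re) :
    ∫ v : ℝ, (x:ℂ) ^ (b + v * I - S) / ((b + v * I - S) * (b + v * I - S)) = 0 := by
  have hx0 : 0 < x := by linarith
  have hxc : (x:ℂ) ≠ 0 := by exact_mod_cast hx0.ne'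
  set b' := 2 * S.re - b with hb'
  have h1 : ∫ v : ℝ, (x:ℂ) ^ (-(b' + v * I - S)) / ((b' + v * I - S) * (b' + v * I - S)) = 0 := by
    refine halfplane_div_zero (h := fun s => (x:ℂ) ^ (-(s - S))) (K := 1) (by linarith)
      (by linarith) ?_ ?_
    · refine Differentiable.differentiableOn ?_
      refine Differentiable.const_cpow (by fun_prop) (Or.inl hxc)
    · intro s hs
      rw [norm_cpow_line hx0, one_mul]
      refine le_trans ?_ (one_le_sqrt' s)
      apply Real.rpow_le_one_of_one_le_of_nonpos hx
      simp; linarith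
  rw [← h1, ← integral_sub_left_eq_self _ volume (2 * S.im)]
  congr 1
  ext v
  have e : (b' + v * I - S : ℂ) = -(b + ((2 * S.im - v : ℝ) : ℂ) * I - S) := by
    apply Complex.ext <;> simp [hb'] <;> ring
  rw [e]
  simp only [neg_neg, neg_mul_neg]

lemma integral_poisson {d : ℝ} (hd : 0 < d) (t : ℝ) :
    ∫ v : ℝ, 1 / (d ^ 2 + (v - t) ^ 2) = Real.pi / d := by
  have h1 : ∫ v : ℝ, 1 / (d ^ 2 + (v - t) ^ 2) = ∫ v : ℝ, 1 / (d ^ 2 + v ^ 2) :=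
    integral_sub_right_eq_self (fun v : ℝ => 1 / (d ^ 2 + v ^ 2)) t
  rw [h1]
  have h2 := Measure.integral_comp_mul_left (fun v : ℝ => (1 + v ^ 2)⁻¹) d⁻¹
  rw [integral_univ_inv_one_add_sq, inv_inv, abs_of_pos hd, smul_eq_mul] at h2
  have h3 : ∀ v : ℝ, 1 / (d ^ 2 + v ^ 2) = (1 / d ^ 2) * (1 + (d⁻¹ * v) ^ 2)⁻¹ := by
    intro v; field_simp
  simp_rw [h3]
  rw [integral_const_mul, h2]; field_simp

lemma prod_reflect {b v : ℝ} {S : ℂ} :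
    ((b + v * I - S) * (b + v * I - (S - 2 * (S.re - b : ℝ))) : ℂ) =
      -(((S.re - b) ^ 2 + (v - S.im) ^ 2 : ℝ) : ℂ) := by
  have h : S = S.re + S.im * I := (re_add_im S).symm
  generalize S.re = α at *
  generalize S.im = β at *
  rw [h]
  push_cast
  linear_combination ((v:ℂ) - β) ^ 2 * I_sq

lemma double_pole {H : ℂ → ℂ} {a0 b c K : ℝ} {S : ℂ} (ha : a0 < b) (hbS : b < S.re) (hSc : S.re < c)
    (hd : DifferentiableOn ℂ H {s | a0 < s.re})
    (hK : ∀ s : ℂ, b ≤ s.re → s.re ≤ c → ‖H s‖ ≤ K * √(1 + ‖s‖)) :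
    (∫ v : ℝ, H (c + v * I) / ((c + v * I - S) * (c + v * I - S))) =
      (∫ v : ℝ, H (b + v * I) / ((b + v * I - S) * (b + v * I - S))) + 2 * Real.pi * deriv H S := by
  set d := S.re - b with hddef
  have hd0 : 0 < d := by linarith
  set p' : ℂ := S - 2 * (d:ℝ) with hp'
  have hp're : p'.re = b - d := by simp [hp', hddef]; ring
  set a1 := max a0 (b - d) with ha1
  have ha1b : a1 < b := max_lt ha (by linarith)
  set D := deriv H S with hD
  set k : ℂ → ℂ := fun s => H s - H S - D * (2 * d) * ((s - S) / (s - p')) with hk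
  have hopen0 : IsOpen {s : ℂ | a0 < s.re} := isOpen_lt continuous_const continuous_re
  have hopen : IsOpen {s : ℂ | a1 < s.re} := isOpen_lt continuous_const continuous_re
  have hSmem : S ∈ {s : ℂ | a1 < s.re} := show a1 < S.re by linarith
  have hHd : ∀ s : ℂ, a1 < s.re → DifferentiableAt ℂ H s := fun s hs =>
    hd.differentiableAt (hopen0.mem_nhds (lt_of_le_of_lt (le_max_left _ _) hs))
  have hpne : ∀ s : ℂ, a1 < s.re → s - p' ≠ 0 := fun s hs => sub_ne_zero_of_re (by
    have := lt_of_le_of_lt (le_max_right a0 (b - d)) hs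
    linarith)
  have hkd : DifferentiableOn ℂ k {s | a1 < s.re} := by
    intro s hs
    have h1 := hHd s hs
    have h2 := hpne s hs
    apply DifferentiableAt.differentiableWithinAt
    simp only [hk]
    have h3 : DifferentiableAt ℂ (fun s => (s - S)/(s - p')) s :=
      DifferentiableAt.fun_div (by fun_prop) (by fun_prop) h2
    exact (h1.sub_const _).fun_sub (h3.const_mul _)
  have hkS : k S = 0 := by simp [hk]
  have hSp : S - p' = 2 * d := by simp [hp']
  have hdc : (d:ℂ) ≠ 0 := by exact_mod_cast hd0.ne'
  have hk'S : deriv k S = 0 := by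
    have h1 : HasDerivAt (fun s : ℂ => s - S) 1 S := (hasDerivAt_id S).sub_const S
    have h2 : HasDerivAt (fun s : ℂ => s - p') 1 S := (hasDerivAt_id S).sub_const p'
    have h3 := h1.fun_div h2 (hpne S hSmem)
    have h4 := (((hHd S hSmem).hasDerivAt).sub_const (H S)).fun_sub (h3.const_mul (D * (2 * d)))
    rw [h4.deriv, hSp]
    field_simp
    simp [hD]
    ring
  set E := dslope (dslope k S) S with hE
  have hEd : DifferentiableOn ℂ E {s | a1 < s.re} := by
    rw [hE, Complex.differentiableOn_dslope (hopen.mem_nhds hSmem),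
      Complex.differentiableOn_dslope (hopen.mem_nhds hSmem)]
    exact hkd
  have hEeq : ∀ s, s ≠ S → E s = k s / ((s - S) * (s - S)) := by
    intro s hs
    have : s - S ≠ 0 := sub_ne_zero.mpr hs
    rw [hE, dslope_of_ne _ hs, slope_def_field, dslope_of_ne _ hs, dslope_same, hk'S,
      slope_def_field, hkS]
    field_simp
    ring
  have hq : ∀ s : ℂ, b ≤ s.re → ‖(s - S) / (s - p')‖ ≤ 3 := by
    intro s hs
    have h0 := hpne s (by linarith)
    have h1 : d ≤ ‖s - p'‖ := by
      have := re_le_norm (s - p'); rw [sub_re, hp're] at this; linarith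
    have h2 : s - S = (s - p') - 2 * d := by rw [hp']; ring
    rw [h2, sub_div, div_self h0]
    refine (norm_sub_le _ _).trans ?_
    rw [norm_one, norm_div]
    have : ‖(2 * d : ℂ)‖ = 2 * d := by simp [abs_of_pos hd0]
    rw [this]
    have : 2 * d / ‖s - p'‖ ≤ 2 := by rw [div_le_iff₀ (by linarith)]; linarith
    linarith
  set K' := K + ‖H S‖ + ‖D * (2 * d)‖ * 3 with hK'
  have hkb : ∀ s : ℂ, b ≤ s.re → s.re ≤ c → ‖k s‖ ≤ K' * √(1 + ‖s‖) := by
    intro s h1 h2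
    have h3 := hK s h1 h2
    have h4 := hq s h1
    have h5 := one_le_sqrt' s
    have h6 : ‖k s‖ ≤ ‖H s‖ + ‖H S‖ + ‖D * (2 * d)‖ * 3 := by
      simp only [hk]
      refine (norm_sub_le _ _).trans ?_
      refine add_le_add (norm_sub_le _ _) ?_
      rw [norm_mul]; gcongr
    have h7 := norm_nonneg (H S)
    have h8 := norm_nonneg (D * (2 * d))
    rw [hK']
    nlinarith
  have hshift := strip_shift (H := E) (b := b) (c := c) (C := 8 * K')
    (R0 := 2 * ‖S‖ + 2 * ‖S‖ + 1) (by linarith)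
    (hEd.mono fun s hs => lt_of_lt_of_le ha1b hs.1) (by
      intro s h1 h2 h3
      have : s ≠ S := by
        rintro rfl
        linarith [norm_nonneg s]
      rw [hEeq s this]
      exact growth_div (hkb s h1 h2) h3)
  have hline : ∀ a : ℝ, b ≤ a → a ≤ c → a ≠ S.re →
      ∫ v : ℝ, E (a + v * I) = (∫ v : ℝ, H (a + v * I) / ((a + v * I - S) * (a + v * I - S))) -
        H S * (∫ v : ℝ, (1:ℂ) / ((a + v * I - S) * (a + v * I - S))) -
        D * (2 * d) * (∫ v : ℝ, (1:ℂ) / ((a + v * I - S) * (a + v * I - p'))) := by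
    intro a h1 h2 h3
    have hap : a ≠ p'.re := by rw [hp're]; intro h; linarith
    have i1 := line_div_integrable (h := H) (K := K) h3 h3
      (fun s hs => ((hHd s (by have : s.re = a := hs; linarith)).continuousAt).continuousWithinAt)
      (fun s hs => hK s (by linarith) (by linarith))
    have i2 := line_div_integrable (h := fun _ => (1:ℂ)) (K := 1) h3 h3 continuousOn_const
      (fun s hs => by simpa using one_le_sqrt' s)
    have i3 := line_div_integrable (h := fun _ => (1:ℂ)) (K := 1) h3 hap continuousOn_const
      (fun s hs => by simpa using one_le_sqrt' s)
    have i12 : Integrable (fun v : ℝ => H (a + v * I) / ((a + v * I - S) * (a + v * I - S)) -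
        H S * ((1:ℂ) / ((a + v * I - S) * (a + v * I - S)))) := i1.sub (i2.const_mul _)
    rw [← integral_const_mul, ← integral_const_mul, ← integral_sub i1 (i2.const_mul _),
      ← integral_sub i12 (i3.const_mul _)]
    congr 1
    ext v
    have hre : (a + v * I : ℂ).re = a := by simp
    have hne : (a + v * I : ℂ) - S ≠ 0 := sub_ne_zero_of_re (by rw [hre]; exact h3)
    have hne' : (a + v * I : ℂ) - p' ≠ 0 := sub_ne_zero_of_re (by rw [hre]; exact hap)
    rw [hEeq _ (sub_ne_zero.mp hne)]
    simp only [hk]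
    field_simp
  have hlb := hline b le_rfl (by linarith) (by linarith)
  have hlc := hline c (by linarith) le_rfl (by linarith)
  have c1 : ∫ v : ℝ, (1:ℂ) / ((c + v * I - S) * (c + v * I - S)) = 0 :=
    halfplane_div_zero (h := fun _ => (1:ℂ)) (K := 1) hSc hSc (differentiableOn_const _)
      (fun s _ => by simpa using one_le_sqrt' s)
  have c2 : ∫ v : ℝ, (1:ℂ) / ((c + v * I - S) * (c + v * I - p')) = 0 :=
    halfplane_div_zero (h := fun _ => (1:ℂ)) (K := 1) hSc (by rw [hp're]; linarith)
      (differentiableOn_const _) (fun s _ => by simpa using one_le_sqrt' s)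
  have b1 : ∫ v : ℝ, (1:ℂ) / ((b + v * I - S) * (b + v * I - S)) = 0 := by
    have := perron_left (x := 1) le_rfl hbS
    simpa using this
  have b2 : ∫ v : ℝ, (1:ℂ) / ((b + v * I - S) * (b + v * I - p')) = -(Real.pi / d : ℝ) := by
    rw [← integral_poisson hd0 S.im, ← integral_complex_ofReal, ← integral_neg]
    congr 1
    ext v
    rw [hp', hddef, prod_reflect]
    push_cast
    rw [div_neg]
  rw [hlb, hlc, c1, c2, b1, b2] at hshift
  have e : (2 * d * ((Real.pi / d : ℝ):ℂ)) = 2 * Real.pi := by push_cast; field_simp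
  linear_combination -hshift + D * e

end Stmt6

namespace Stmt6
open Complex Metric Set Filter Topology MeasureTheory
open scoped ComplexConjugate

lemma line_re (b v : ℝ) : (b + v * I : ℂ).re = b := by simp

lemma perron_shift {h : ℂ → ℂ} {a0 b c K x : ℝ} {S : ℂ} (hx : 1 ≤ x) (ha : a0 < b) (hbS : b < S.re)
    (hSc : S.re < c) (hd : DifferentiableOn ℂ h {s | a0 < s.re})
    (hK : ∀ s : ℂ, b ≤ s.re → ‖h s‖ ≤ K * √(1 + ‖s‖)) :
    (∫ v : ℝ, h (c + v * I) * (x:ℂ) ^ (c + v * I - S) / ((c + v * I - S) * (c + v * I - S))) =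
      (∫ v : ℝ, h (b + v * I) * (x:ℂ) ^ (b + v * I - S) / ((b + v * I - S) * (b + v * I - S))) +
        2 * Real.pi * (h S * Real.log x + deriv h S) := by
  have hx0 : 0 < x := by linarith
  have hxc : (x:ℂ) ≠ 0 := by exact_mod_cast hx0.ne'
  have hcp : Differentiable ℂ (fun s : ℂ => (x:ℂ) ^ (s - S)) :=
    Differentiable.const_cpow (by fun_prop) (Or.inl hxc)
  have hopen : IsOpen {s : ℂ | a0 < s.re} := isOpen_lt continuous_const continuous_re
  have hdS : DifferentiableAt ℂ h S := hd.differentiableAt (hopen.mem_nhds (show a0 < S.re by linarith))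
  have key := double_pole (H := fun s => h s * (x:ℂ) ^ (s - S)) (K := K * x ^ (c - S.re)) ha hbS hSc
    (hd.fun_mul hcp.differentiableOn) (by
      intro s h1 h2
      rw [norm_mul, norm_cpow_line hx0]
      have e : K * x ^ (c - S.re) * √(1 + ‖s‖) = (K * √(1 + ‖s‖)) * x ^ (c - S.re) := by ring
      rw [e]
      have := hK s h1
      have h0 : 0 ≤ K * √(1 + ‖s‖) := (norm_nonneg _).trans this
      gcongr
      rw [sub_re]; linarith)
  rw [key]
  congr 2
  have h1 : HasDerivAt (fun s : ℂ => s - S) 1 S := (hasDerivAt_id S).sub_const S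
  have h2 := h1.const_cpow (c := (x:ℂ)) (Or.inl hxc)
  have h3 := hdS.hasDerivAt.fun_mul h2
  rw [h3.deriv]
  simp only [sub_self, cpow_zero, ← ofReal_log hx0.le]
  ring

lemma perron_zero {y c : ℝ} {S : ℂ} (hy0 : 0 < y) (hy : y ≤ 1) (hSc : S.re < c) :
    ∫ v : ℝ, (y:ℂ) ^ (c + v * I - S) / ((c + v * I - S) * (c + v * I - S)) = 0 := by
  have hxc : (y:ℂ) ≠ 0 := by exact_mod_cast hy0.ne'
  refine halfplane_div_zero (h := fun s => (y:ℂ) ^ (s - S)) (K := 1) hSc hSc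
    (Differentiable.const_cpow (by fun_prop) (Or.inl hxc)).differentiableOn ?_
  intro s hs
  rw [norm_cpow_line hy0, one_mul]
  refine le_trans ?_ (one_le_sqrt' s)
  apply Real.rpow_le_one hy0.le hy
  rw [sub_re]; linarith

lemma perron_log {y c : ℝ} {S : ℂ} (hy : 1 ≤ y) (hSc : S.re < c) :
    ∫ v : ℝ, (y:ℂ) ^ (c + v * I - S) / ((c + v * I - S) * (c + v * I - S)) =
      2 * Real.pi * Real.log y := by
  have := perron_shift (h := fun _ => (1:ℂ)) (a0 := S.re - 2) (b := S.re - 1) (K := 1) hy (by linarith)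
    (by linarith) hSc (differentiableOn_const _) (fun s _ => by simpa using one_le_sqrt' s)
  simp only [one_mul, deriv_const, add_zero] at this
  rw [this, perron_left hy (by linarith), zero_add]

lemma kernel_norm {x : ℝ} (hx0 : 0 < x) (b v : ℝ) (S : ℂ) :
    ‖(x:ℂ) ^ (b + v * I - S) / ((b + v * I - S) * (b + v * I - S))‖ =
      x ^ (b - S.re) * (1 / ((S.re - b) ^ 2 + (v - S.im) ^ 2)) := by
  rw [norm_div, norm_cpow_line hx0, norm_mul, norm_mul_self_eq_normSq, normSq_apply]
  simp only [sub_re, sub_im, line_re, add_im, mul_im, ofReal_re, ofReal_im, I_re, I_im]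
  rw [mul_one_div]
  congr 1
  ring

lemma poisson_integrable {d : ℝ} (hd : 0 < d) (t : ℝ) :
    Integrable (fun v : ℝ => 1 / (d ^ 2 + (v - t) ^ 2)) := by
  have := line_div_integrable (h := fun _ => (1:ℂ)) (K := 1) (a := 0) (p := d + t * I)
    (p' := d + t * I) (by simpa using hd.ne) (by simpa using hd.ne) continuousOn_const
      (fun s hs => by simpa using one_le_sqrt' s)
  refine this.norm.congr (Eventually.of_forall fun v => ?_)
  have := kernel_norm (x := 1) one_pos 0 v (d + t * I)
  simp only [ofReal_one, one_cpow, Real.one_rpow, one_mul] at this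
  simp only [ofReal_zero] at this ⊢
  rw [this]
  simp

lemma kernel_integrable {x a : ℝ} (hx0 : 0 < x) {S : ℂ} (h : a ≠ S.re) :
    Integrable (fun v : ℝ => (x:ℂ) ^ (a + v * I - S) / ((a + v * I - S) * (a + v * I - S))) := by
  have hxc : (x:ℂ) ≠ 0 := by exact_mod_cast hx0.ne'
  refine line_div_integrable (h := fun s => (x:ℂ) ^ (s - S)) (K := x ^ (a - S.re)) h h
    (Differentiable.const_cpow (by fun_prop) (Or.inl hxc)).continuous.continuousOn ?_
  intro s hs
  rw [norm_cpow_line hx0, sub_re, hs]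
  have := one_le_sqrt' s
  have : 0 ≤ x ^ (a - S.re) := by positivity
  nlinarith

/-- Termwise integration. -/
lemma perron_sum {a : ℕ → ℂ} {c x : ℝ} {S : ℂ} (hx : 1 ≤ x) (hSc : S.re < c)
    (ha : LSeriesSummable a c) :
    (∫ v : ℝ, LSeries a (c + v * I) * (x:ℂ) ^ (c + v * I - S) /
      ((c + v * I - S) * (c + v * I - S))) =
    2 * Real.pi * ∑ n ∈ Finset.Icc 1 ⌊x⌋₊, a n / (n:ℂ) ^ S * (Real.log (x / n) : ℂ) := by
  have hx0 : 0 < x := by linarith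
  set k : ℝ → ℂ := fun v => (x:ℂ) ^ (c + v * I - S) / ((c + v * I - S) * (c + v * I - S)) with hk
  set F : ℕ → ℝ → ℂ := fun n v => LSeries.term a (c + v * I) n * k v with hF
  have hki : Integrable k := kernel_integrable hx0 hSc.ne'
  have hnorm : ∀ (n : ℕ) (v : ℝ), ‖LSeries.term a (c + v * I) n‖ = ‖LSeries.term a c n‖ := by
    intro n v
    simp [LSeries.norm_term_eq]
  have hFint : ∀ n, Integrable (F n) := by
    intro n
    refine hki.bdd_mul (c := ‖LSeries.term a c n‖) ?_ (Eventually.of_forall fun v => (hnorm n v).le)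
    refine Continuous.aestronglyMeasurable ?_
    rcases Nat.eq_zero_or_pos n with rfl | hn
    · simp only [LSeries.term_zero]; exact continuous_const
    · have hn0 : (n:ℂ) ≠ 0 := by exact_mod_cast hn.ne'
      simp only [LSeries.term_of_ne_zero hn.ne']
      refine continuous_const.div ?_ ?_
      · exact Continuous.const_cpow (by fun_prop) (Or.inl hn0)
      · intro v; simp [cpow_eq_zero_iff, hn0]
  have hFsum : Summable fun n => ∫ v, ‖F n v‖ := by
    have e : (fun n => ∫ v, ‖F n v‖) = fun n => ‖LSeries.term a c n‖ * ∫ v, ‖k v‖ := by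
      ext n
      rw [← integral_const_mul]
      congr 1
      ext v
      rw [hF]; simp only [norm_mul, hnorm]
    rw [e]
    exact (ha.norm).mul_right _
  have hs := hasSum_integral_of_summable_integral_norm hFint hFsum
  have e1 : ∀ v : ℝ, ∑' n, F n v = LSeries a (c + v * I) * (x:ℂ) ^ (c + v * I - S) /
      ((c + v * I - S) * (c + v * I - S)) := by
    intro v
    rw [hF]; simp only [tsum_mul_right]
    rw [hk, LSeries, mul_div_assoc]
  simp_rw [e1] at hs
  have e0 : ∀ n : ℕ, n ≠ 0 → ∫ v, F n v = a n / (n:ℂ) ^ S * ∫ v : ℝ, ((x / n : ℝ) : ℂ) ^ (c + v * I - S) /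
      ((c + v * I - S) * (c + v * I - S)) := by
    intro n hn
    rw [← integral_const_mul]
    congr 1
    ext v
    have hnpos : 0 < (n:ℝ) := by exact_mod_cast Nat.pos_of_ne_zero hn
    have hn0 : (n:ℂ) ≠ 0 := by exact_mod_cast hn
    rw [hF, hk]
    simp only [LSeries.term_of_ne_zero hn]
    set w : ℂ := c + v * I - S with hw
    have h1 : (c + v * I : ℂ) = w + S := by rw [hw]; ring
    have h2 : (x:ℂ) ^ w = ((x / n : ℝ) : ℂ) ^ w * (n:ℂ) ^ w := by
      rw [← ofReal_natCast, ← mul_cpow_ofReal_nonneg (by positivity) (by positivity)]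
      congr 1
      rw [← ofReal_mul]
      congr 1
      field_simp
    rw [h1, h2, cpow_add _ _ hn0]
    have h3 : (n:ℂ) ^ w ≠ 0 := by simp [cpow_eq_zero_iff, hn0]
    field_simp
  have e2 : ∀ n, n ∈ Finset.Icc 1 ⌊x⌋₊ →
      ∫ v, F n v = 2 * Real.pi * (a n / (n:ℂ) ^ S * (Real.log (x / n) : ℂ)) := by
    intro n hn
    rw [Finset.mem_Icc] at hn
    have hnpos : 0 < (n:ℝ) := by exact_mod_cast hn.1
    have hnx : (n:ℝ) ≤ x := (Nat.le_floor_iff hx0.le).mp hn.2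
    rw [e0 n (by omega), perron_log ((one_le_div hnpos).mpr hnx) hSc]
    ring
  have e3 : ∀ n, n ∉ Finset.Icc 1 ⌊x⌋₊ → ∫ v, F n v = 0 := by
    intro n hn
    rcases Nat.eq_zero_or_pos n with rfl | hn0
    · simp [hF]
    have hnpos : 0 < (n:ℝ) := by exact_mod_cast hn0
    have hnx : x ≤ n := by
      by_contra! h
      exact hn (Finset.mem_Icc.mpr ⟨hn0, Nat.le_floor h.le⟩)
    rw [e0 n hn0.ne', perron_zero (by positivity) ((div_le_one hnpos).mpr hnx) hSc, mul_zero]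
  rw [← hs.tsum_eq, tsum_eq_sum e3, Finset.mul_sum]
  exact Finset.sum_congr rfl e2

/-- Poisson formula for a half plane. -/
lemma poisson_half {f : ℂ → ℂ} {a0 b K : ℝ} {S : ℂ} (ha : a0 < b) (hbS : b < S.re)
    (hd : DifferentiableOn ℂ f {s | a0 < s.re})
    (hK : ∀ s : ℂ, b ≤ s.re → ‖f s‖ ≤ K * √(1 + ‖s‖)) :
    Integrable (fun v : ℝ => (f (b + v * I)).re * (1 / ((S.re - b) ^ 2 + (v - S.im) ^ 2))) ∧
    ∫ v : ℝ, (f (b + v * I)).re * (1 / ((S.re - b) ^ 2 + (v - S.im) ^ 2)) =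
      Real.pi * (f S).re / (S.re - b) := by
  have hopen : IsOpen {s : ℂ | a0 < s.re} := isOpen_lt continuous_const continuous_re
  have hSmem : S ∈ {s : ℂ | a0 < s.re} := show a0 < S.re by linarith
  set d := S.re - b with hddef
  have hd0 : 0 < d := by linarith
  set p' : ℂ := S - 2 * (d:ℝ) with hp'
  have hp're : p'.re = b - d := by simp [hp', hddef]; ring
  have hden : ∀ v : ℝ, (b + v * I - S) * (b + v * I - p') = -((d ^ 2 + (v - S.im) ^ 2 : ℝ) : ℂ) :=
    fun v => by rw [hp', hddef]; exact prod_reflect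
  have hInt : Integrable (fun v : ℝ => f (b + v * I) / ((b + v * I - S) * (b + v * I - p'))) :=
    line_div_integrable (K := K) (by linarith) (by rw [hp're]; linarith)
      (hd.continuousOn.mono fun s hs => by
        have : s.re = b := hs
        show a0 < s.re
        linarith) (fun s hs => hK s hs.ge)
  have hint1 : Integrable (fun v : ℝ => 1 / ((b + v * I - S) * (b + v * I - p'))) :=
    line_div_integrable (h := fun _ => 1) (K := 1) (by linarith) (by rw [hp're]; linarith)
      continuousOn_const (fun s hs => by simpa using one_le_sqrt' s)
  have hz : ∫ v : ℝ, dslope f S (b + v * I) / (b + v * I - p') = 0 := by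
    refine halfplane_zero (H := fun s => dslope f S s / (s - p'))
      (C := 8 * (K + ‖f S‖)) (R0 := 2 * ‖S‖ + 2 * ‖p'‖ + 1) ?_ ?_
    · refine DifferentiableOn.div (((Complex.differentiableOn_dslope (hopen.mem_nhds hSmem)).mpr hd).mono
        fun s hs => lt_of_lt_of_le ha hs) (by fun_prop) fun s hs => ?_
      have hs' : b ≤ s.re := hs
      exact sub_ne_zero_of_re (by linarith)
    · intro s h1 h3
      have hne : s ≠ S := by
        rintro rfl
        linarith [norm_nonneg s, norm_nonneg p']
      rw [dslope_of_ne _ hne, slope_def_field, div_div]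
      refine growth_div ?_ h3
      have := one_le_sqrt' s
      have := hK s h1
      have := norm_sub_le (f s) (f S)
      have := norm_nonneg (f S)
      nlinarith
  have hz2 : ∫ v : ℝ, f (b + v * I) / ((b + v * I - S) * (b + v * I - p')) =
      f S * ∫ v : ℝ, 1 / ((b + v * I - S) * (b + v * I - p')) := by
    rw [← sub_eq_zero, ← hz, ← integral_const_mul, ← integral_sub hInt (hint1.const_mul _)]
    congr 1
    ext v
    have hne : (b + v * I : ℂ) - S ≠ 0 := sub_ne_zero_of_re (by rw [line_re]; exact hbS.ne)
    rw [dslope_of_ne _ (sub_ne_zero.mp hne), slope_def_field, div_div]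
    ring
  have e1 : ∀ v : ℝ, f (b + v * I) / ((b + v * I - S) * (b + v * I - p')) =
      - (f (b + v * I) * ((1 / (d ^ 2 + (v - S.im) ^ 2) : ℝ) : ℂ)) := by
    intro v; rw [hden, div_neg]; push_cast; ring
  have e2 : ∀ v : ℝ, (1:ℂ) / ((b + v * I - S) * (b + v * I - p')) =
      - ((1 / (d ^ 2 + (v - S.im) ^ 2) : ℝ) : ℂ) := by
    intro v; rw [hden, div_neg]; push_cast; ring
  simp_rw [e1] at hInt hz2
  simp_rw [e2] at hz2
  rw [integral_neg, integral_neg, integral_complex_ofReal, integral_poisson hd0, mul_neg, neg_inj] at hz2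
  have hInt' : Integrable (fun v : ℝ => f (b + v * I) * ((1 / (d ^ 2 + (v - S.im) ^ 2) : ℝ) : ℂ)) := by
    simpa using hInt.neg
  have e3 : ∀ v : ℝ, (f (b + v * I) * ((1 / (d ^ 2 + (v - S.im) ^ 2) : ℝ) : ℂ)).re =
      (f (b + v * I)).re * (1 / (d ^ 2 + (v - S.im) ^ 2)) := fun v => re_mul_ofReal _ _
  constructor
  · exact hInt'.re.congr (Eventually.of_forall fun v => e3 v)
  · have := integral_re hInt'
    rw [hz2] at this
    simp only [RCLike.re_eq_complex_re, e3] at this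
    rw [this, re_mul_ofReal]
    ring

lemma conj_bound {f : ℂ → ℂ} {a0 b K x : ℝ} {S S0 : ℂ} (hx : 1 ≤ x) (ha : a0 < b) (hbS : b < S0.re)
    (hre : S0.re ≤ S.re) (him : S0.im = S.im)
    (hd : DifferentiableOn ℂ f {s | a0 < s.re})
    (hK : ∀ s : ℂ, b ≤ s.re → ‖f s‖ ≤ K * √(1 + ‖s‖)) (hpos : ∀ s : ℂ, b ≤ s.re → 0 ≤ (f s).re) :
    ‖∫ v : ℝ, f (b + v * I) * (x:ℂ) ^ (b + v * I - S) / ((b + v * I - S) * (b + v * I - S))‖ ≤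
      2 * Real.pi * (x ^ (b - S.re) * (f S0).re / (S0.re - b)) := by
  have hx0 : 0 < x := by linarith
  have hxc : (x:ℂ) ≠ 0 := by exact_mod_cast hx0.ne'
  set k : ℝ → ℂ := fun v => (x:ℂ) ^ (b + v * I - S) / ((b + v * I - S) * (b + v * I - S)) with hk
  have hcont : ContinuousOn f {s | s.re = b} := hd.continuousOn.mono fun s hs => by
    have : s.re = b := hs
    show a0 < s.re
    linarith
  obtain ⟨p1, p2⟩ := poisson_half ha hbS hd hK
  have hki : Integrable k := kernel_integrable hx0 (by linarith)
  have hfk : Integrable (fun v : ℝ => f (b + v * I) * k v) := by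
    have hcp : Differentiable ℂ (fun s : ℂ => (x:ℂ) ^ (s - S)) :=
      Differentiable.const_cpow (by fun_prop) (Or.inl hxc)
    have := line_div_integrable (h := fun s => f s * (x:ℂ) ^ (s - S)) (K := K * x ^ (b - S.re))
      (a := b) (p := S) (p' := S) (by linarith) (by linarith)
      (hcont.mul hcp.continuous.continuousOn) (by
        intro s hs
        rw [norm_mul, norm_cpow_line hx0, sub_re, hs, mul_right_comm]
        gcongr
        exact hK s hs.ge)
    refine this.congr (Eventually.of_forall fun v => ?_)
    simp only [hk, mul_div_assoc]
  set S' : ℂ := 2 * b - conj S with hS'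
  have hS're : S'.re = 2 * b - S.re := by simp [hS']
  have hconjk : ∀ v : ℝ, conj (k v) = (x:ℂ) ^ (-(b + v * I - S')) / ((b + v * I - S') * (b + v * I - S')) := by
    intro v
    have e : conj (b + v * I - S : ℂ) = -(b + v * I - S') := by
      simp only [map_sub, map_add, map_mul, conj_ofReal, conj_I, hS']; ring
    rw [hk]
    simp only [map_div₀, map_mul, e, neg_mul_neg]
    congr 1
    rw [← e, cpow_conj _ _ (by rw [arg_ofReal_of_nonneg hx0.le]; exact Real.pi_pos.ne), conj_ofReal]
  have hz : ∫ v : ℝ, f (b + v * I) * conj (k v) = 0 := by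
    have := halfplane_div_zero (h := fun s => f s * (x:ℂ) ^ (-(s - S'))) (b := b) (K := K) (p := S')
      (p' := S') (by linarith) (by linarith)
      ((hd.mono fun s hs => lt_of_lt_of_le ha hs).fun_mul
        (Differentiable.const_cpow (by fun_prop) (Or.inl hxc)).differentiableOn) (by
        intro s hs
        rw [norm_mul, norm_cpow_line hx0]
        have h1 : x ^ (-(s - S')).re ≤ 1 := by
          apply Real.rpow_le_one_of_one_le_of_nonpos hx
          rw [neg_re, sub_re, hS're]; linarith
        calc _ ≤ ‖f s‖ * 1 := by gcongr
          _ ≤ _ := by rw [mul_one]; exact hK s hs)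
    rw [← this]
    congr 1
    ext v
    rw [hconjk, mul_div_assoc]
  have hz' : ∫ v : ℝ, conj (f (b + v * I)) * k v = 0 := by
    have h1 : ∫ v : ℝ, conj (f (b + v * I) * conj (k v)) = 0 := by
      rw [integral_conj, hz, map_zero]
    simpa using h1
  have hfk' : Integrable (fun v : ℝ => conj (f (b + v * I)) * k v) := by
    refine hfk.mono ?_ (Eventually.of_forall fun v => by simp)
    refine AEStronglyMeasurable.mul ?_ hki.1
    refine Continuous.aestronglyMeasurable ?_
    refine continuous_conj.comp ?_
    exact hcont.comp_continuous (by fun_prop) (fun v => line_re b v)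
  have e1 : ∫ v : ℝ, f (b + v * I) * (x:ℂ) ^ (b + v * I - S) / ((b + v * I - S) * (b + v * I - S)) =
      ∫ v : ℝ, ((2 * (f (b + v * I)).re : ℝ) : ℂ) * k v := by
    have h1 : ∫ v : ℝ, (f (b + v * I) * k v + conj (f (b + v * I)) * k v) =
      ∫ v : ℝ, f (b + v * I) * k v := by
      rw [integral_add hfk hfk', hz', add_zero]
    simp only [mul_div_assoc]
    rw [← h1]
    congr 1
    ext v
    rw [← add_mul, add_conj]
  rw [e1]
  have hpi := Real.pi_pos
  have e2 : 2 * Real.pi * (x ^ (b - S.re) * (f S0).re / (S0.re - b)) =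
      ∫ v : ℝ, 2 * x ^ (b - S.re) * ((f (b + v * I)).re * (1 / ((S0.re - b) ^ 2 + (v - S0.im) ^ 2))) := by
    rw [integral_const_mul, p2]; ring
  rw [e2]
  refine norm_integral_le_of_norm_le (p1.const_mul _) (Eventually.of_forall fun v => ?_)
  have h0 := hpos (b + v * I) (line_re b v).ge
  rw [norm_mul, hk]
  simp only
  rw [kernel_norm hx0, norm_real, Real.norm_of_nonneg (by positivity), him]
  have h5 : 0 < S0.re - b := by linarith
  have : 1 / ((S.re - b) ^ 2 + (v - S.im) ^ 2) ≤ 1 / ((S0.re - b) ^ 2 + (v - S.im) ^ 2) := by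
    gcongr
  calc _ ≤ 2 * (f (b + v * I)).re * (x ^ (b - S.re) * (1 / ((S0.re - b) ^ 2 + (v - S.im) ^ 2))) := by
        gcongr
    _ = _ := by ring

lemma log_diff {v : ℝ} {S : ℂ} (hS : 0 ≤ S.re) :
    ‖Complex.log (1 + ((0:ℝ) + v * I)) - Complex.log (1 + S)‖ ≤
      6 * √(1 + ‖(0:ℝ) + v * I - S‖) := by
  set z : ℂ := 1 + ((0:ℝ) + v * I) with hz
  set u : ℂ := 1 + S with hu
  have e : ((0:ℝ) + v * I - S : ℂ) = z - u := by rw [hz, hu]; ring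
  rw [e]
  have hzre : z.re = 1 := by simp [hz]
  have hure : 1 ≤ u.re := by simp [hu, hS]
  have hz1 : 1 ≤ ‖z‖ := hzre ▸ re_le_norm z
  have hu1 : 1 ≤ ‖u‖ := hure.trans (re_le_norm u)
  set W := ‖z - u‖ with hW
  have hW0 : 0 ≤ W := norm_nonneg _
  have hzu : ‖z‖ ≤ ‖u‖ * (1 + W) := by
    have := norm_sub_norm_le z u
    nlinarith
  have huz : ‖u‖ ≤ ‖z‖ * (1 + W) := by
    have := norm_sub_norm_le u z
    rw [norm_sub_rev] at this
    nlinarith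
  have l1 : Real.log ‖z‖ ≤ Real.log ‖u‖ + Real.log (1 + W) := by
    rw [← Real.log_mul (by positivity) (by positivity)]
    exact Real.log_le_log (by positivity) hzu
  have l2 : Real.log ‖u‖ ≤ Real.log ‖z‖ + Real.log (1 + W) := by
    rw [← Real.log_mul (by positivity) (by positivity)]
    exact Real.log_le_log (by positivity) huz
  have l3 : Real.log (1 + W) ≤ 2 * √(1 + W) := by
    have h1 := Real.log_sqrt (x := 1 + W) (by linarith)
    have h2 := Real.log_le_sub_one_of_pos (x := √(1 + W)) (by positivity)
    linarith
  have a1 : |z.arg| ≤ Real.pi / 2 := abs_arg_le_pi_div_two_iff.mpr (by linarith)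
  have a2 : |u.arg| ≤ Real.pi / 2 := abs_arg_le_pi_div_two_iff.mpr (by linarith)
  have hs1 : 1 ≤ √(1 + W) := by rw [Real.one_le_sqrt]; linarith
  refine (norm_le_abs_re_add_abs_im _).trans ?_
  rw [sub_re, sub_im, log_re, log_re, log_im, log_im]
  have b1 : |Real.log ‖z‖ - Real.log ‖u‖| ≤ 2 * √(1 + W) := by
    rw [abs_le]; constructor <;> linarith
  have b2 : |z.arg - u.arg| ≤ 4 := by
    refine (abs_sub _ _).trans ?_
    linarith [Real.pi_lt_four]
  linarith

lemma log_bound : ∃ C : ℝ, 0 ≤ C ∧ ∀ (x : ℝ) (S : ℂ), 1 ≤ x → 1 / 2 ≤ S.re →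
    ‖∫ v : ℝ, Complex.log (1 + ((0:ℝ) + v * I)) * (x:ℂ) ^ ((0:ℝ) + v * I - S) /
      (((0:ℝ) + v * I - S) * ((0:ℝ) + v * I - S))‖ ≤ C * x ^ (- S.re) := by
  refine ⟨54 * ∫ v : ℝ, (1 + |v|) ^ (-(3/2 : ℝ)), by positivity, fun x S hx hS => ?_⟩
  have hx0 : 0 < x := by linarith
  set k : ℝ → ℂ := fun v => (x:ℂ) ^ ((0:ℝ) + v * I - S) / (((0:ℝ) + v * I - S) * ((0:ℝ) + v * I - S)) with hk
  have hki : Integrable k := kernel_integrable (a := 0) hx0 (by linarith)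
  have hk0 : ∫ v, k v = 0 := perron_left hx (by linarith)
  have hg : Integrable (fun v : ℝ => 54 * x ^ (-S.re) * (1 + |v - S.im|) ^ (-(3/2 : ℝ))) :=
    (integrable_decay.comp_sub_right S.im).const_mul _
  have hb : ∀ v : ℝ, ‖(Complex.log (1 + ((0:ℝ) + v * I)) - Complex.log (1 + S)) * k v‖ ≤
      54 * x ^ (-S.re) * (1 + |v - S.im|) ^ (-(3/2 : ℝ)) := by
    intro v
    have h1 := log_diff (v := v) (S := S) (by linarith)
    set w : ℂ := (0:ℝ) + v * I - S with hw
    have hwre : w.re = - S.re := by simp [hw]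
    have hwim : w.im = v - S.im := by simp [hw]
    have hw1 : 1 / 2 ≤ ‖w‖ := by
      have := abs_re_le_norm w
      rw [hwre, abs_neg, abs_of_pos (by linarith)] at this; linarith
    have hw2 : |v - S.im| ≤ ‖w‖ := hwim ▸ abs_im_le_norm w
    have hkn : ‖k v‖ = x ^ (-S.re) / ‖w‖ ^ 2 := by
      rw [hk]; simp only [← hw]
      rw [norm_div, norm_cpow_line hx0, hwre, norm_mul, sq]
    have hr : (3 * ‖w‖) ^ (-(3/2:ℝ)) ≤ (1 + |v - S.im|) ^ (-(3/2:ℝ)) := by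
      apply Real.rpow_le_rpow_of_nonpos
      · positivity
      · linarith
      · norm_num
    have hr2 : √(3 * ‖w‖) / ‖w‖ ^ 2 = 9 * (3 * ‖w‖) ^ (-(3/2:ℝ)) := by
      have h3 : (0:ℝ) < 3 * ‖w‖ := by linarith
      have : (-(3/2:ℝ)) = 1/2 - (2:ℕ) := by norm_num
      rw [this, Real.rpow_sub h3, Real.rpow_natCast, ← Real.sqrt_eq_rpow]
      field_simp
      norm_num
    rw [norm_mul, hkn]
    have h4 : √(1 + ‖w‖) ≤ √(3 * ‖w‖) := Real.sqrt_le_sqrt (by linarith)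
    have hxp : 0 < x ^ (-S.re) := by positivity
    calc _ ≤ (6 * √(3 * ‖w‖)) * (x ^ (-S.re) / ‖w‖ ^ 2) := by
          gcongr; exact h1.trans (by gcongr)
      _ = 6 * x ^ (-S.re) * (√(3 * ‖w‖) / ‖w‖ ^ 2) := by ring
      _ = 54 * x ^ (-S.re) * (3 * ‖w‖) ^ (-(3/2:ℝ)) := by rw [hr2]; ring
      _ ≤ _ := by gcongr
  have hlogc : Continuous fun v : ℝ => Complex.log (1 + ((0:ℝ) + v * I)) := by
    refine Continuous.clog (by fun_prop) fun v => ?_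
    left; simp
  have hi : Integrable (fun v : ℝ => (Complex.log (1 + ((0:ℝ) + v * I)) - Complex.log (1 + S)) * k v) := by
    refine hg.mono' ?_ (Eventually.of_forall hb)
    exact ((hlogc.sub continuous_const).aestronglyMeasurable).mul hki.1
  have e : ∫ v : ℝ, Complex.log (1 + ((0:ℝ) + v * I)) * (x:ℂ) ^ ((0:ℝ) + v * I - S) /
      (((0:ℝ) + v * I - S) * ((0:ℝ) + v * I - S)) =
      ∫ v : ℝ, (Complex.log (1 + ((0:ℝ) + v * I)) - Complex.log (1 + S)) * k v := by
    have h1 : ∫ v : ℝ, ((Complex.log (1 + ((0:ℝ) + v * I)) - Complex.log (1 + S)) * k v +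
      Complex.log (1 + S) * k v) = ∫ v : ℝ, (Complex.log (1 + ((0:ℝ) + v * I)) - Complex.log (1 + S)) * k v := by
      rw [integral_add hi (hki.const_mul _), integral_const_mul, hk0, mul_zero, add_zero]
    rw [← h1]
    congr 1
    ext v
    rw [hk]; ring
  rw [e]
  refine (norm_integral_le_of_norm_le hg (Eventually.of_forall hb)).trans ?_
  rw [integral_const_mul, integral_sub_right_eq_self (fun v : ℝ => (1 + |v|) ^ (-(3/2 : ℝ))) S.im]
  apply le_of_eq
  ring

end Stmt6

namespace Stmt6
open Complex Metric Set Filter Topology MeasureTheory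
open DirichletCharacter

lemma growth_extend {f : ℂ → ℂ} {b K : ℝ} (hb : 1 / 2 < b)
    (hd : DifferentiableOn ℂ f {s | 1 / 2 < s.re}) (hpos : ∀ s : ℂ, 1 / 2 < s.re → 0 ≤ (f s).re)
    (hK : ∀ s : ℂ, 2 ≤ s.re → ‖f s‖ ≤ K * √(1 + ‖s‖)) :
    ∃ K' : ℝ, ∀ s : ℂ, b ≤ s.re → ‖f s‖ ≤ K' * √(1 + ‖s‖) := by
  have hK0 : 0 ≤ K := by
    by_contra! h
    have h1 := hK 2 (by simp)
    have h2 := one_le_sqrt' 2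
    have := norm_nonneg (f 2)
    nlinarith
  set δ := b - 1 / 2 with hδ
  have hδ0 : 0 < δ := by linarith
  refine ⟨K + (3 + 6 * K) / δ, fun s hs => ?_⟩
  have hsq := one_le_sqrt' s
  have hq : 0 ≤ (3 + 6 * K) / δ := by positivity
  rcases le_or_gt 2 s.re with h2 | h2
  · refine (hK s h2).trans ?_
    gcongr
    linarith
  set z0 : ℂ := 2 + s.im * I with hz0
  set z : ℂ := ((s.re - 2 : ℝ) : ℂ) with hz
  have hzs : z0 + z = s := by
    apply Complex.ext <;> simp [hz0, hz]
  have hzn : ‖z‖ = 2 - s.re := by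
    rw [hz, norm_real, Real.norm_eq_abs, abs_of_neg (by linarith)]; ring
  have hre : ∀ u ∈ ball (0:ℂ) (3/2), 1 / 2 < (z0 + u).re := by
    intro u hu
    rw [mem_ball_zero_iff] at hu
    have := neg_le_of_abs_le (abs_re_le_norm u)
    simp [hz0]; linarith
  have key := Complex.borelCaratheodory (f := fun u => -f (z0 + u)) (M := 1) (R := 3/2) (z := z) one_pos
    (by
      refine DifferentiableOn.fun_neg ?_
      refine hd.comp (g := f) (f := fun u => z0 + u) (by fun_prop) ?_
      intro u hu; exact hre u hu)
    (by
      intro u hu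
      show (-f (z0 + u)).re ≤ 1
      rw [neg_re]
      linarith [hpos _ (hre u hu)])
    (by norm_num) (by rw [mem_ball_zero_iff, hzn]; linarith)
  simp only [hzs, add_zero, norm_neg] at key
  have hz0n : ‖f z0‖ ≤ 2 * K * √(1 + ‖s‖) := by
    refine (hK z0 (by simp [hz0])).trans ?_
    have h1 : ‖z0‖ ≤ ‖s‖ + 2 := by
      have : z0 = s - z := by rw [← hzs]; ring
      rw [this]
      refine (norm_sub_le _ _).trans ?_
      rw [hzn]; linarith
    have h3 : √(1 + ‖z0‖) ≤ 2 * √(1 + ‖s‖) := by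
      rw [Real.sqrt_le_left (by positivity), mul_pow, Real.sq_sqrt (by positivity)]
      linarith [norm_nonneg s]
    nlinarith
  have hR : δ ≤ 3 / 2 - ‖z‖ := by rw [hzn]; linarith
  have hz32 : ‖z‖ ≤ 3 / 2 := by linarith
  calc ‖f s‖ ≤ _ := key
    _ ≤ 2 * 1 * (3/2) / δ + (2 * K * √(1 + ‖s‖)) * (3 / 2 + 3 / 2) / δ := by gcongr
    _ = (3 + 6 * K * √(1 + ‖s‖)) / δ := by ring
    _ ≤ (3 + 6 * K) * √(1 + ‖s‖) / δ := by gcongr; nlinarith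
    _ ≤ _ := by
      rw [add_mul K, div_mul_eq_mul_div]
      have : 0 ≤ K * √(1 + ‖s‖) := by positivity
      linarith

lemma log_growth {s : ℂ} (hs : 0 ≤ s.re) : ‖Complex.log (1 + s)‖ ≤ 6 * √(1 + ‖s‖) := by
  set u : ℂ := 1 + s with hu
  have hure : 1 ≤ u.re := by simp [hu, hs]
  have hu1 : 1 ≤ ‖u‖ := hure.trans (re_le_norm u)
  have hus : ‖u‖ ≤ 1 + ‖s‖ := by simpa using norm_add_le 1 s
  have l3 : Real.log ‖u‖ ≤ 2 * √(1 + ‖s‖) := by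
    have h1 := Real.log_sqrt (x := ‖u‖) (by linarith)
    have h2 := Real.log_le_sub_one_of_pos (x := √‖u‖) (by positivity)
    have h3 := Real.sqrt_le_sqrt hus
    linarith
  have a2 : |u.arg| ≤ Real.pi / 2 := abs_arg_le_pi_div_two_iff.mpr (by linarith)
  have hs1 := one_le_sqrt' s
  refine (norm_le_abs_re_add_abs_im _).trans ?_
  rw [log_re, log_im, abs_of_nonneg (Real.log_nonneg hu1)]
  linarith [Real.pi_lt_four]

noncomputable def vmc {q : ℕ} (χ : DirichletCharacter ℂ q) (n : ℕ) : ℂ :=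
  χ n * (ArithmeticFunction.vonMangoldt n : ℂ)

lemma vmc_summable {q : ℕ} (χ : DirichletCharacter ℂ q) {s : ℂ} (hs : 1 < s.re) :
    LSeriesSummable (vmc χ) s := LSeriesSummable_twist_vonMangoldt χ hs

lemma logDeriv_L_eq {q : ℕ} [NeZero q] (χ : DirichletCharacter ℂ q) {s : ℂ} (hs : 1 < s.re) :
    logDeriv (LFunction χ) s = - LSeries (vmc χ) s := by
  have h := LSeries_twist_vonMangoldt_eq χ hs
  have e : LSeries (vmc χ) s = _ := h
  rw [e, logDeriv_apply, deriv_LFunction_eq_deriv_LSeries χ hs, LFunction_eq_LSeries χ hs]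
  ring

lemma logDeriv_differentiable {q : ℕ} [NeZero q] (χ : DirichletCharacter ℂ q) (hχ : χ ≠ 1)
    (hRH : ∀ s : ℂ, 0 < s.re → s.re < 1 → LFunction χ s = 0 → s.re = 1 / 2) :
    DifferentiableOn ℂ (logDeriv (LFunction χ)) {s | 1 / 2 < s.re} := by
  have h1 : Differentiable ℂ (LFunction χ) := differentiable_LFunction hχ
  have h2 : Differentiable ℂ (deriv (LFunction χ)) :=
    differentiableOn_univ.mp (h1.differentiableOn.deriv isOpen_univ)
  exact h2.differentiableOn.div h1.differentiableOn fun s hs => LFunction_ne_zero' χ hχ hRH hs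

lemma logDeriv_growth {q : ℕ} [NeZero q] (χ : DirichletCharacter ℂ q) :
    ∃ K : ℝ, 0 ≤ K ∧ ∀ s : ℂ, 2 ≤ s.re → ‖logDeriv (LFunction χ) s‖ ≤ K := by
  refine ⟨∑' n, ‖LSeries.term (vmc χ) 2 n‖, tsum_nonneg fun _ => norm_nonneg _, fun s hs => ?_⟩
  have h2 : LSeriesSummable (vmc χ) 2 := vmc_summable χ (by simp)
  have hs' : LSeriesSummable (vmc χ) s := vmc_summable χ (by linarith)
  rw [logDeriv_L_eq χ (by linarith), norm_neg, LSeries]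
  refine (norm_tsum_le_tsum_norm hs'.norm).trans ?_
  refine Summable.tsum_le_tsum (fun n => ?_) hs'.norm h2.norm
  exact LSeries.norm_term_le_of_re_le_re _ (by simpa using hs) n

lemma growth_kernel_integrable {h : ℂ → ℂ} {a K x : ℝ} {S : ℂ} (hx0 : 0 < x) (ha : a ≠ S.re)
    (hcont : ContinuousOn h {s | s.re = a}) (hK : ∀ s : ℂ, s.re = a → ‖h s‖ ≤ K * √(1 + ‖s‖)) :
    Integrable (fun v : ℝ => h (a + v * I) * (x:ℂ) ^ (a + v * I - S) /
      ((a + v * I - S) * (a + v * I - S))) := by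
  have hxc : (x:ℂ) ≠ 0 := by exact_mod_cast hx0.ne'
  have hcp : Differentiable ℂ (fun s : ℂ => (x:ℂ) ^ (s - S)) :=
    Differentiable.const_cpow (by fun_prop) (Or.inl hxc)
  refine line_div_integrable (h := fun s => h s * (x:ℂ) ^ (s - S)) (K := K * x ^ (a - S.re))
    ha ha (hcont.mul hcp.continuous.continuousOn) ?_
  intro s hs
  rw [norm_mul, norm_cpow_line hx0, sub_re, hs, mul_right_comm]
  gcongr
  exact hK s hs

/-- Explicit formula inequality. -/
lemma main_ineq : ∃ C0 C1 : ℝ, 0 ≤ C0 ∧ 0 ≤ C1 ∧ ∀ (q : ℕ) [NeZero q], 1 < q →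
    ∀ χ : DirichletCharacter ℂ q, χ ≠ 1 → χ.IsPrimitive →
    (∀ s : ℂ, 0 < s.re → s.re < 1 → LFunction χ s = 0 → s.re = 1 / 2) →
    (∀ s : ℂ, 1/2 < s.re →
      0 ≤ (logDeriv (LFunction χ) s).re + Real.log q / 2 + Real.log ‖s + 1‖ / 2 + C0) ∧
    ∀ (x b : ℝ) (S S0 : ℂ), 1 ≤ x → 1 / 2 < b → b < S0.re → S0.re ≤ S.re → S0.im = S.im →
    0 ≤ (logDeriv (LFunction χ) S * Real.log x + deriv (logDeriv (LFunction χ)) S +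
      ∑ n ∈ Finset.Icc 1 ⌊x⌋₊, vmc χ n / (n:ℂ) ^ S * (Real.log (x / n) : ℂ)).re +
      ((logDeriv (LFunction χ) S0).re + Real.log q / 2 + Real.log ‖S0 + 1‖ / 2 + C0) / (S0.re - b) *
        x ^ (b - S.re) + C1 * x ^ (-S.re) := by
  obtain ⟨C0, hC0, hre⟩ := re_logDeriv_L
  obtain ⟨C1, hC1, hlog⟩ := log_bound
  refine ⟨C0, C1, hC0, hC1, fun q _ hq χ hχ hp hRH => ⟨hre q hq χ hχ hp hRH, ?_⟩⟩
  intro x b S S0 hx hb hbS hS0 him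
  have hx0 : 0 < x := by linarith
  set κ : ℝ := Real.log q / 2 + C0 with hκ
  set f : ℂ → ℂ := fun s => logDeriv (LFunction χ) s + κ + Complex.log (1 + s) / 2 with hf
  have hfre : ∀ s, (f s).re = (logDeriv (LFunction χ) s).re + Real.log q / 2 + Real.log ‖s + 1‖ / 2 + C0 := by
    intro s
    have : (Complex.log (1 + s) / 2).re = Real.log ‖s + 1‖ / 2 := by
      have : Complex.log (1 + s) / 2 = Complex.log (1 + s) / (2:ℝ) := by norm_num
      rw [this, div_ofReal_re, log_re, add_comm]
    rw [hf]; simp only [add_re, ofReal_re, this, hκ]; ring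
  have hfpos : ∀ s : ℂ, 1 / 2 < s.re → 0 ≤ (f s).re := fun s hs => by
    rw [hfre]; exact hre q hq χ hχ hp hRH s hs
  have hld := logDeriv_differentiable χ hχ hRH
  have hℓd : DifferentiableOn ℂ (fun s : ℂ => Complex.log (1 + s)) {s | -(1/2) < s.re} := by
    intro s hs
    have hs' : -(1/2) < s.re := hs
    refine (DifferentiableAt.clog (by fun_prop) ?_).differentiableWithinAt
    left; rw [add_re, one_re]; linarith
  have hfd : DifferentiableOn ℂ f {s | 1 / 2 < s.re} := by
    refine (hld.fun_add (differentiableOn_const _)).fun_add ?_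
    refine DifferentiableOn.div_const (hℓd.mono fun s hs => ?_) 2
    have hs' : 1/2 < s.re := hs
    show -(1/2) < s.re
    linarith
  obtain ⟨K1, hK1, hgr⟩ := logDeriv_growth χ
  obtain ⟨K, hK⟩ := growth_extend (K := K1 + |κ| + 3) hb hfd hfpos (by
    intro s hs
    have h1 := hgr s hs
    have h2 := log_growth (s := s) (by linarith)
    have h3 := one_le_sqrt' s
    have h4 : ‖f s‖ ≤ ‖logDeriv (LFunction χ) s‖ + |κ| + ‖Complex.log (1 + s)‖ / 2 := by
      rw [hf]
      refine (norm_add₃_le).trans ?_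
      simp
    have := abs_nonneg κ
    nlinarith)
  have hbS' : b < S.re := by linarith
  set c := max 1 S.re + 1 with hc
  have hc1 : 1 < c := by linarith [le_max_left 1 S.re]
  have hSc : S.re < c := by linarith [le_max_right 1 S.re]
  have sh1 := perron_shift (a0 := 1/2) hx hb hbS' hSc hfd hK
  have sh2 := perron_shift (a0 := -(1/2)) (b := 0) (K := 6) hx (by norm_num) (by linarith) hSc hℓd
    (fun s hs => log_growth hs)
  have sh3 := perron_log (c := c) hx hSc
  have sh4 := perron_sum (a := vmc χ) (c := c) (S := S) hx hSc (vmc_summable χ (by simpa using hc1))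
  set k : ℝ → ℂ := fun v => (x:ℂ) ^ (c + v * I - S) / ((c + v * I - S) * (c + v * I - S)) with hk
  have hki : Integrable k := kernel_integrable hx0 hSc.ne'
  have hif := growth_kernel_integrable (h := f) (K := K) (S := S) (a := c) hx0 hSc.ne'
    (hfd.continuousOn.mono fun s hs => by
      have : s.re = c := hs
      show 1/2 < s.re
      linarith) (fun s hs => hK s (by linarith))
  have hiℓ := growth_kernel_integrable (h := fun s => Complex.log (1 + s)) (K := 6) (S := S) (a := c)
    hx0 hSc.ne' (hℓd.continuousOn.mono fun s hs => by
      have : s.re = c := hs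
      show -(1/2) < s.re
      linarith) (fun s hs => log_growth (by linarith))
  have hi12 : Integrable (fun v : ℝ => f (c + v * I) * (x:ℂ) ^ (c + v * I - S) /
      ((c + v * I - S) * (c + v * I - S)) - (κ:ℂ) * k v) := hif.sub (hki.const_mul _)
  have hsplit : (∫ v : ℝ, f (c + v * I) * (x:ℂ) ^ (c + v * I - S) /
      ((c + v * I - S) * (c + v * I - S))) - κ * (∫ v, k v) -
      (1/2) * (∫ v : ℝ, Complex.log (1 + (c + v * I)) * (x:ℂ) ^ (c + v * I - S) /
      ((c + v * I - S) * (c + v * I - S))) = -(∫ v : ℝ, LSeries (vmc χ) (c + v * I) *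
        (x:ℂ) ^ (c + v * I - S) / ((c + v * I - S) * (c + v * I - S))) := by
    rw [← integral_const_mul, ← integral_const_mul, ← integral_sub hif (hki.const_mul _),
      ← integral_sub hi12 (hiℓ.const_mul _), ← integral_neg]
    congr 1
    ext v
    have h1 := logDeriv_L_eq χ (s := c + v * I) (by rw [line_re]; exact hc1)
    simp only [hf, hk, h1]
    ring
  rw [sh1, sh2, sh3, sh4] at hsplit
  have hSmem : {s : ℂ | 1 / 2 < s.re} ∈ 𝓝 S :=
    (isOpen_lt continuous_const continuous_re).mem_nhds (show 1/2 < S.re by linarith)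
  have hSmem' : {s : ℂ | -(1 / 2) < s.re} ∈ 𝓝 S :=
    (isOpen_lt continuous_const continuous_re).mem_nhds (show -(1/2) < S.re by linarith)
  have hderiv : deriv f S = deriv (logDeriv (LFunction χ)) S +
      deriv (fun s : ℂ => Complex.log (1 + s)) S / 2 := by
    have h1 := (hld.differentiableAt hSmem).hasDerivAt
    have h2 := (hℓd.differentiableAt hSmem').hasDerivAt
    exact ((h1.add_const (κ:ℂ)).fun_add (h2.div_const 2)).deriv
  rw [hderiv] at hsplit
  have hB1 := conj_bound hx hb hbS hS0 him hfd hK (fun s hs => hfpos s (by linarith))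
  have hB2 := hlog x S hx (by linarith)
  rw [hfre] at hB1
  set A := (logDeriv (LFunction χ) S0).re + Real.log q / 2 + Real.log ‖S0 + 1‖ / 2 + C0 with hA
  set J1 := ∫ v : ℝ, f (b + v * I) * (x:ℂ) ^ (b + v * I - S) / ((b + v * I - S) * (b + v * I - S)) with hJ1
  set J2 := ∫ v : ℝ, Complex.log (1 + ((0:ℝ) + v * I)) * (x:ℂ) ^ ((0:ℝ) + v * I - S) /
      (((0:ℝ) + v * I - S) * ((0:ℝ) + v * I - S)) with hJ2
  set E := logDeriv (LFunction χ) S * Real.log x + deriv (logDeriv (LFunction χ)) S +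
      ∑ n ∈ Finset.Icc 1 ⌊x⌋₊, vmc χ n / (n:ℂ) ^ S * (Real.log (x / n) : ℂ) with hE
  have hEeq : ((2 * Real.pi : ℝ) : ℂ) * E = -J1 + (1/2 : ℝ) * J2 := by
    rw [hE]
    simp only [hf] at hsplit
    push_cast
    linear_combination hsplit
  have hEre : 2 * Real.pi * E.re = -J1.re + 1/2 * J2.re := by
    have := congrArg Complex.re hEeq
    rwa [re_ofReal_mul, add_re (-J1), neg_re, re_ofReal_mul] at this
  have h1 := (le_abs_self _).trans (abs_re_le_norm J1)
  have h2 := (neg_abs_le J2.re)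
  have h3 := abs_re_le_norm J2
  have hpi : (3:ℝ) < Real.pi := Real.pi_gt_three
  have hCx : 0 ≤ C1 * x ^ (-S.re) := by positivity
  have e : A / (S0.re - b) * x ^ (b - S.re) = x ^ (b - S.re) * A / (S0.re - b) := by ring
  rw [e]
  set T := x ^ (b - S.re) * A / (S0.re - b)
  set U := C1 * x ^ (-S.re)
  have : 0 ≤ 2 * Real.pi * (E.re + T + U) := by
    have : U ≤ 2 * Real.pi * U := by nlinarith
    nlinarith
  exact nonneg_of_mul_nonneg_right this (by positivity)

end Stmt6

namespace Stmt6
open Complex Metric Set Filter Topology MeasureTheory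
open DirichletCharacter

lemma tendsto_twist {f : ℕ → ℂ} (hf : LSeriesSummable f 2) (t : ℝ) :
    Tendsto (fun σ : ℝ => LSeries f (σ + t * I)) atTop (𝓝 (f 1)) := by
  set g : ℕ → ℂ := fun n => f n / (n:ℂ) ^ (t * I) with hg
  have hterm : ∀ s : ℂ, LSeries.term f (s + t * I) = LSeries.term g s := by
    intro s
    ext n
    rcases Nat.eq_zero_or_pos n with rfl | hn
    · simp
    · have hn0 : (n:ℂ) ≠ 0 := by exact_mod_cast hn.ne'
      rw [LSeries.term_of_ne_zero hn.ne', LSeries.term_of_ne_zero hn.ne', hg, cpow_add _ _ hn0,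
        div_div, mul_comm]
  have hg2 : LSeriesSummable g 2 := by
    have h1 : LSeriesSummable f (2 + t * I) :=
      (LSeriesSummable_iff_of_re_eq_re (by simp)).mp hf
    rw [LSeriesSummable, hterm] at h1
    exact h1
  have habs : LSeries.abscissaOfAbsConv g < ⊤ := by
    refine lt_of_le_of_lt hg2.abscissaOfAbsConv_le ?_
    exact EReal.coe_lt_top _
  have := LSeries.tendsto_atTop habs
  have e : g 1 = f 1 := by simp [hg]
  rw [e] at this
  refine this.congr fun σ => ?_
  rw [LSeries, LSeries, hterm]

lemma hasDerivAt_log_norm {F : ℂ → ℂ} {σ t : ℝ} (hd : DifferentiableAt ℂ F (σ + t * I))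
    (h0 : F (σ + t * I) ≠ 0) :
    HasDerivAt (fun u : ℝ => Real.log ‖F (u + t * I)‖) (logDeriv F (σ + t * I)).re σ := by
  have h1 : HasDerivAt (fun z : ℂ => F (z + t * I)) (deriv F (σ + t * I)) (σ : ℂ) := by
    have := hd.hasDerivAt.comp_add_const (σ : ℂ) (t * I)
    exact this
  have h2 := h1.comp_ofReal
  have h3 := h2.norm_sq
  have hne : ‖F (σ + t * I)‖ ^ 2 ≠ 0 := by
    have := norm_pos_iff.mpr h0
    positivity
  have h4 := (h3.log hne).div_const 2
  have e : ∀ u : ℝ, Real.log (‖F (u + t * I)‖ ^ 2) / 2 = Real.log ‖F (u + t * I)‖ := by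
    intro u; rw [Real.log_pow]; push_cast; ring
  simp only [e] at h4
  refine h4.congr_deriv ?_
  rw [logDeriv_apply, Complex.inner, div_re, ← normSq_eq_norm_sq]
  simp only [mul_re, conj_re, conj_im]
  have hN : normSq (F (σ + t * I)) ≠ 0 := by rwa [normSq_eq_norm_sq]
  field_simp
  ring

lemma vmc_one {q : ℕ} (χ : DirichletCharacter ℂ q) : vmc χ 1 = 0 := by simp [vmc]

lemma one_lt_log_two_mul : 1 ≤ 2 * Real.log 2 := by linarith [Real.log_two_gt_d9]

/-- the weighted sum -/
noncomputable def wsum {q : ℕ} (χ : DirichletCharacter ℂ q) (x : ℝ) (S : ℂ) : ℂ :=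
  ∑ n ∈ Finset.Icc 1 ⌊x⌋₊, vmc χ n / (n:ℂ) ^ S * ((Real.log (x / n) / Real.log n : ℝ) : ℂ)

lemma wsum_deriv {q : ℕ} (χ : DirichletCharacter ℂ q) (x : ℝ) (S : ℂ) :
    HasDerivAt (wsum χ x) (-∑ n ∈ Finset.Icc 1 ⌊x⌋₊, vmc χ n / (n:ℂ) ^ S * (Real.log (x / n) : ℂ)) S := by
  unfold wsum
  rw [← Finset.sum_neg_distrib]
  refine HasDerivAt.fun_sum fun n hn => ?_
  rw [Finset.mem_Icc] at hn
  rcases eq_or_lt_of_le hn.1 with h1 | h1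
  · subst h1
    simp only [vmc_one, zero_div, zero_mul, neg_zero]
    exact hasDerivAt_const _ _
  have hn0 : (n:ℂ) ≠ 0 := by exact_mod_cast (by omega : n ≠ 0)
  have hlog : Real.log n ≠ 0 := (Real.log_pos (by exact_mod_cast h1)).ne'
  have hlogc : (Real.log n : ℂ) ≠ 0 := by exact_mod_cast hlog
  have h2 : HasDerivAt (fun s : ℂ => (n:ℂ) ^ (-s)) ((n:ℂ) ^ (-S) * Complex.log n * (-1)) S :=
    (hasDerivAt_id S).fun_neg.const_cpow (Or.inl hn0)
  have h3 := (h2.const_mul (vmc χ n)).mul_const ((Real.log (x / n) / Real.log n : ℝ) : ℂ)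
  simp only [cpow_neg, ← div_eq_mul_inv] at h3
  refine h3.congr_deriv ?_
  rw [← ofReal_natCast n, ← ofReal_log (by positivity), ofReal_natCast, ofReal_div]
  generalize (Real.log n : ℂ) = l at *
  field_simp

lemma wsum_tendsto {q : ℕ} (χ : DirichletCharacter ℂ q) (x t : ℝ) :
    Tendsto (fun σ : ℝ => wsum χ x (σ + t * I)) atTop (𝓝 0) := by
  unfold wsum
  rw [← Finset.sum_const_zero (s := Finset.Icc 1 ⌊x⌋₊)]
  refine tendsto_finsetSum _ fun n hn => ?_
  rw [Finset.mem_Icc] at hn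
  rcases eq_or_lt_of_le hn.1 with h1 | h1
  · subst h1
    simp only [vmc_one, zero_div, zero_mul]
    exact tendsto_const_nhds
  have hn0 : (1:ℝ) < n := by exact_mod_cast h1
  rw [← zero_mul ((Real.log (x / n) / Real.log n : ℝ) : ℂ)]
  refine Tendsto.mul_const _ ?_
  rw [tendsto_zero_iff_norm_tendsto_zero]
  have h2 : ∀ σ : ℝ, ‖vmc χ n / (n:ℂ) ^ (σ + t * I : ℂ)‖ = ‖vmc χ n‖ * ((n:ℝ)⁻¹) ^ σ := by
    intro σ
    rw [norm_div, ← ofReal_natCast n, norm_cpow_line (by linarith), line_re,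
      Real.inv_rpow (by linarith), div_eq_mul_inv]
  simp only [h2]
  rw [← mul_zero ‖vmc χ n‖]
  refine Tendsto.const_mul _ ?_
  refine tendsto_rpow_atTop_of_base_lt_one _ ?_ (inv_lt_one_of_one_lt₀ hn0)
  have : 0 < (n:ℝ)⁻¹ := by positivity
  linarith

lemma rpow_term_deriv {x : ℝ} (hx : 1 < x) (b σ : ℝ) :
    HasDerivAt (fun u : ℝ => x ^ (b - u) / Real.log x) (-(x ^ (b - σ))) σ := by
  have hlog := Real.log_pos hx
  have h1 : HasDerivAt (fun u : ℝ => b - u) (-1) σ := (hasDerivAt_id σ).const_sub b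
  have h2 := (h1.const_rpow (by linarith : 0 < x)).div_const (Real.log x)
  refine h2.congr_deriv ?_
  field_simp

lemma rpow_term_tendsto {x : ℝ} (hx : 1 < x) (b : ℝ) :
    Tendsto (fun u : ℝ => x ^ (b - u) / Real.log x) atTop (𝓝 0) := by
  rw [← zero_div (Real.log x)]
  refine Tendsto.div_const ?_ _
  have h2 : ∀ σ : ℝ, x ^ (b - σ) = x ^ b * (x⁻¹) ^ σ := by
    intro σ
    rw [Real.rpow_sub (by linarith), Real.inv_rpow (by linarith), div_eq_mul_inv]
  simp only [h2]
  rw [← mul_zero (x ^ b)]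
  refine Tendsto.const_mul _ ?_
  refine tendsto_rpow_atTop_of_base_lt_one _ ?_ (inv_lt_one_of_one_lt₀ hx)
  have : 0 < x⁻¹ := by positivity
  linarith

lemma logL_tendsto {q : ℕ} [NeZero q] (χ : DirichletCharacter ℂ q) (t : ℝ) :
    Tendsto (fun σ : ℝ => Real.log ‖LFunction χ (σ + t * I)‖) atTop (𝓝 0) := by
  have h1 : LSeriesSummable (fun n : ℕ => χ n) 2 :=
    (LSeriesSummable_iff (NeZero.ne q) χ).mpr (by simp)
  have h2 := tendsto_twist h1 t
  simp only [Nat.cast_one, map_one] at h2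
  have h3 : Tendsto (fun σ : ℝ => LFunction χ (σ + t * I)) atTop (𝓝 1) := by
    refine h2.congr' ?_
    filter_upwards [eventually_gt_atTop 1] with σ hσ
    rw [LFunction_eq_LSeries χ (by rw [line_re]; exact hσ)]
  have h4 := h3.norm
  rw [norm_one] at h4
  have := h4.log one_ne_zero
  rwa [Real.log_one] at this

lemma logDerivL_tendsto {q : ℕ} [NeZero q] (χ : DirichletCharacter ℂ q) (t : ℝ) :
    Tendsto (fun σ : ℝ => logDeriv (LFunction χ) (σ + t * I)) atTop (𝓝 0) := by
  have h2 := (tendsto_twist (vmc_summable χ (s := 2) (by simp)) t).neg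
  rw [vmc_one, neg_zero] at h2
  refine h2.congr' ?_
  filter_upwards [eventually_gt_atTop 1] with σ hσ
  rw [logDeriv_L_eq χ (by rw [line_re]; exact hσ)]

/-- Integrated inequality. -/
lemma integrated : ∃ C0 C1 : ℝ, 0 ≤ C0 ∧ 0 ≤ C1 ∧ ∀ (q : ℕ) [NeZero q], 1 < q →
    ∀ χ : DirichletCharacter ℂ q, χ ≠ 1 → χ.IsPrimitive →
    (∀ s : ℂ, 0 < s.re → s.re < 1 → LFunction χ s = 0 → s.re = 1 / 2) →
    (∀ s : ℂ, 1/2 < s.re →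
      0 ≤ (logDeriv (LFunction χ) s).re + Real.log q / 2 + Real.log ‖s + 1‖ / 2 + C0) ∧
    ∀ (x b σ0 t : ℝ), 1 < x → 1 / 2 < b → b < σ0 →
    Real.log ‖LFunction χ (σ0 + t * I)‖ * Real.log x + (logDeriv (LFunction χ) (σ0 + t * I)).re ≤
      (wsum χ x (σ0 + t * I)).re +
      ((logDeriv (LFunction χ) (σ0 + t * I)).re + Real.log q / 2 + Real.log ‖(σ0 + t * I : ℂ) + 1‖ / 2 + C0)
        / (σ0 - b) * (x ^ (b - σ0) / Real.log x) + C1 * (x ^ (0 - σ0) / Real.log x) := by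
  obtain ⟨C0, C1, hC0, hC1, hmain⟩ := main_ineq
  refine ⟨C0, C1, hC0, hC1, fun q _ hq χ hχ hp hRH => ?_⟩
  obtain ⟨hpos, hm⟩ := hmain q hq χ hχ hp hRH
  refine ⟨hpos, fun x b σ0 t hx hb hbσ => ?_⟩
  set A := ((logDeriv (LFunction χ) (σ0 + t * I)).re + Real.log q / 2 +
    Real.log ‖(σ0 + t * I : ℂ) + 1‖ / 2 + C0) / (σ0 - b) with hA
  set R : ℝ → ℝ := fun u => Real.log ‖LFunction χ (u + t * I)‖ * Real.log x +
    (logDeriv (LFunction χ) (u + t * I)).re - (wsum χ x (u + t * I)).re -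
    A * (x ^ (b - u) / Real.log x) - C1 * (x ^ (0 - u) / Real.log x) with hR
  have hld := logDeriv_differentiable χ hχ hRH
  have hderiv : ∀ u : ℝ, 1 / 2 < u → HasDerivAt R
      ((logDeriv (LFunction χ) (u + t * I)).re * Real.log x +
        (deriv (logDeriv (LFunction χ)) (u + t * I)).re -
        (-∑ n ∈ Finset.Icc 1 ⌊x⌋₊, vmc χ n / (n:ℂ) ^ (u + t * I : ℂ) * (Real.log (x / n) : ℂ)).re -
        A * (-(x ^ (b - u))) - C1 * (-(x ^ (0 - u)))) u := by
    intro u hu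
    have hu' : 1 / 2 < (u + t * I : ℂ).re := by rw [line_re]; exact hu
    have hmem : {s : ℂ | 1 / 2 < s.re} ∈ 𝓝 (u + t * I : ℂ) :=
      (isOpen_lt continuous_const continuous_re).mem_nhds hu'
    have d1 := (hasDerivAt_log_norm (differentiable_LFunction hχ _)
      (LFunction_ne_zero' χ hχ hRH hu')).mul_const (Real.log x)
    have d2 : HasDerivAt (fun z : ℂ => logDeriv (LFunction χ) (z + t * I)) _ (u : ℂ) :=
      (hld.differentiableAt hmem).hasDerivAt.comp_add_const (u : ℂ) (t * I)
    have d3 : HasDerivAt (fun z : ℂ => wsum χ x (z + t * I)) _ (u : ℂ) :=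
      (wsum_deriv χ x (u + t * I)).comp_add_const (u : ℂ) (t * I)
    have d4 := (rpow_term_deriv hx b u).const_mul A
    have d5 := (rpow_term_deriv hx 0 u).const_mul C1
    exact ((((d1.fun_add d2.real_of_complex).fun_sub d3.real_of_complex).fun_sub d4).fun_sub d5)
  have hmono : MonotoneOn R (Ici σ0) := by
    refine monotoneOn_of_deriv_nonneg (convex_Ici σ0) ?_ ?_ ?_
    · intro u hu
      have hu' : σ0 ≤ u := hu
      exact (hderiv u (by linarith)).continuousAt.continuousWithinAt
    · intro u hu
      rw [interior_Ici] at hu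
      have hu' : σ0 < u := hu
      exact (hderiv u (by linarith)).differentiableAt.differentiableWithinAt
    · intro u hu
      rw [interior_Ici] at hu
      have hu' : σ0 < u := hu
      rw [(hderiv u (by linarith)).deriv]
      have := hm x b (u + t * I) (σ0 + t * I) hx.le hb (by rw [line_re]; exact hbσ)
        (by rw [line_re, line_re]; exact hu'.le) (by simp)
      rw [line_re, line_re] at this
      rw [add_re, add_re, re_mul_ofReal, ← hA] at this
      rw [neg_re, zero_sub]
      linarith
  have hlim : Tendsto R atTop (𝓝 0) := by
    have t1 := (logL_tendsto χ t).mul_const (Real.log x)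
    have t2 := (continuous_re.tendsto 0).comp (logDerivL_tendsto χ t)
    have t3 := (continuous_re.tendsto 0).comp (wsum_tendsto χ x t)
    have t4 := (rpow_term_tendsto hx b).const_mul A
    have t5 := (rpow_term_tendsto hx 0).const_mul C1
    have := (((t1.add t2).sub t3).sub t4).sub t5
    simpa [hR] using this
  have hfin : R σ0 ≤ 0 := by
    refine ge_of_tendsto hlim ?_
    filter_upwards [eventually_ge_atTop σ0] with u hu
    exact hmono (mem_Ici.mpr le_rfl) hu hu
  simp only [hR] at hfin
  linarith

end Stmt6

namespace Stmt6
open Complex Metric Set Filter Topology MeasureTheory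
open DirichletCharacter

lemma log_norm_S {σ t : ℝ} (h0 : 0 ≤ σ) (h1 : σ ≤ 5/2) :
    Real.log ‖(σ + t * I : ℂ) + 1‖ ≤ max 0 (Real.log t) + 7/2 := by
  set M := max 1 |t| with hM
  have hM1 : 1 ≤ M := le_max_left _ _
  have hMt : |t| ≤ M := le_max_right _ _
  have hn : ‖(σ + t * I : ℂ) + 1‖ ≤ 9/2 * M := by
    have e : (σ + t * I : ℂ) + 1 = ((σ + 1 : ℝ) : ℂ) + t * I := by push_cast; ring
    rw [e]
    refine (norm_add_le _ _).trans ?_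
    rw [norm_mul, norm_real, norm_real, norm_I, mul_one, Real.norm_eq_abs, Real.norm_eq_abs,
      abs_of_pos (by linarith)]
    linarith
  have hpos : 0 < ‖(σ + t * I : ℂ) + 1‖ := by
    refine norm_pos_iff.mpr fun h => ?_
    have := congrArg Complex.re h
    simp at this
    linarith
  have h2 := Real.log_le_log hpos hn
  rw [Real.log_mul (by norm_num) (by linarith)] at h2
  have h3 := Real.log_le_sub_one_of_pos (x := (9/2 : ℝ)) (by norm_num)
  have h4 : Real.log M ≤ max 0 (Real.log t) := by
    rcases le_total 1 |t| with h | h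
    · rw [hM, max_eq_right h, Real.log_abs]; exact le_max_right _ _
    · rw [hM, max_eq_left h, Real.log_one]; exact le_max_left _ _
  linarith

lemma exp_aux {d l x : ℝ} (hx : 1 < x) (hl : l = Real.log x) (hd : 3/4 ≤ d * l) :
    x ^ (-d) / (d * l) ≤ 1 := by
  rw [div_le_one (by linarith), Real.rpow_def_of_pos (by linarith), ← hl]
  have h1 := Real.add_one_le_exp (d * l)
  have e : l * -d = -(d * l) := by ring
  rw [e, Real.exp_neg, inv_le_iff_one_le_mul₀ (Real.exp_pos _)]
  nlinarith

set_option maxHeartbeats 1000000 in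
lemma final : ∃ C : ℝ, ∀ (q : ℕ) [NeZero q], 1 < q →
    ∀ χ : DirichletCharacter ℂ q, χ.IsPrimitive →
    (∀ s : ℂ, 0 < s.re → s.re < 1 → LFunction χ s = 0 → s.re = 1 / 2) →
    ∀ x y t : ℝ, 2 ≤ x → 2 ≤ y →
    Real.log ‖LFunction χ ((1 / 2 + 1 / Real.log y : ℝ) + t * I)‖ * Real.log x ≤
      (wsum χ x ((1 / 2 + max (1 / Real.log y) (1 / Real.log x) : ℝ) + t * I)).re +
      (Real.log q + max 0 (Real.log t)) + C := by
  obtain ⟨C0, C1, hC0, hC1, hInt⟩ := integrated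
  refine ⟨7/2 + 2 * C0 + 2 * C1, fun q _ hq χ hp hRH x y t hx hy => ?_⟩
  have hχ : χ ≠ 1 := by
    intro h
    rw [IsPrimitive, h, conductor_one] at hp
    omega
  obtain ⟨hpos, hI⟩ := hInt q hq χ hχ hp hRH
  have hl2 := one_lt_log_two_mul
  have hlx : Real.log 2 ≤ Real.log x := Real.log_le_log (by norm_num) hx
  have hly : Real.log 2 ≤ Real.log y := Real.log_le_log (by norm_num) hy
  set lx := Real.log x with hlxdef
  set ly := Real.log y with hlydef
  have hlx0 : 0 < lx := by linarith
  have hly0 : 0 < ly := by linarith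
  have hinvx : 1 / lx ≤ 2 := by rw [div_le_iff₀ hlx0]; linarith
  have hinvy : 1 / ly ≤ 2 := by rw [div_le_iff₀ hly0]; linarith
  have hx' : 0 < 1 / lx := by positivity
  have hy' : 0 < 1 / ly := by positivity
  set m := max (1 / ly) (1 / lx) with hm
  have hm1 : 1 / ly ≤ m := le_max_left _ _
  have hm2 : 1 / lx ≤ m := le_max_right _ _
  have hm3 : m ≤ 2 := max_le hinvy hinvx
  have hm4 : m - 1 / ly ≤ 1 / lx := by
    rw [hm, sub_le_iff_le_add]; exact max_le (by linarith) (by linarith)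
  set σ0 := 1 / 2 + m with hσ0
  set σ1 := 1 / 2 + 1 / ly with hσ1
  set P := max 0 (Real.log t) with hP
  have hP0 : 0 ≤ P := le_max_left _ _
  have hlq : 0 ≤ Real.log q := Real.log_natCast_nonneg q
  have key := hI x (1 / 2 + m / 4) σ0 t (by linarith) (by linarith) (by linarith)
  have hF0 := hpos (σ0 + t * I) (by rw [line_re]; linarith)
  have hlogS := log_norm_S (σ := σ0) (t := t) (by linarith) (by linarith)
  set F := (logDeriv (LFunction χ) (σ0 + t * I)).re + Real.log q / 2 +
    Real.log ‖(σ0 + t * I : ℂ) + 1‖ / 2 + C0 with hF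
  set d := σ0 - (1 / 2 + m / 4) with hd
  have hdm : d = 3 / 4 * m := by rw [hd, hσ0]; ring
  have hdl : 3 / 4 ≤ d * lx := by
    have : 1 ≤ m * lx := (div_le_iff₀ hlx0).mp hm2
    rw [hdm]; linarith
  have hd0 : 0 < d := by rw [hdm]; linarith
  have t1 : F / d * (x ^ (1 / 2 + m / 4 - σ0) / lx) ≤ F := by
    have e : 1 / 2 + m / 4 - σ0 = -d := by rw [hd]; ring
    have e2 : F / d * (x ^ (-d) / lx) = F * (x ^ (-d) / (d * lx)) := by
      rw [div_mul_div_comm, mul_div_assoc]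
    rw [e, e2]
    have := exp_aux (x := x) (by linarith) hlxdef hdl
    exact (mul_le_mul_of_nonneg_left this hF0).trans_eq (mul_one F)
  have t2 : C1 * (x ^ (0 - σ0) / lx) ≤ 2 * C1 := by
    have h1 : x ^ (0 - σ0) ≤ 1 := Real.rpow_le_one_of_one_le_of_nonpos (by linarith) (by linarith)
    have h2 : x ^ (0 - σ0) / lx ≤ 2 := by
      rw [div_le_iff₀ hlx0]; linarith
    nlinarith
  set B := Real.log q / 2 + P / 2 + 7 / 4 + C0 with hB
  have hB0 : 0 ≤ B := by positivity
  have hmono : MonotoneOn (fun u : ℝ => Real.log ‖LFunction χ (u + t * I)‖ + B * u) (Icc σ1 σ0) := by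
    have hder : ∀ u : ℝ, 1 / 2 < u → HasDerivAt
        (fun u : ℝ => Real.log ‖LFunction χ (u + t * I)‖ + B * u)
        ((logDeriv (LFunction χ) (u + t * I)).re + B * 1) u := by
      intro u hu
      have hu' : 1 / 2 < (u + t * I : ℂ).re := by rw [line_re]; exact hu
      exact (hasDerivAt_log_norm (differentiable_LFunction hχ _)
        (LFunction_ne_zero' χ hχ hRH hu')).fun_add ((hasDerivAt_id u).const_mul B)
    refine monotoneOn_of_deriv_nonneg (convex_Icc σ1 σ0) ?_ ?_ ?_
    · intro u hu
      exact (hder u (by linarith [hu.1])).continuousAt.continuousWithinAt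
    · intro u hu
      rw [interior_Icc] at hu
      exact (hder u (by linarith [hu.1])).differentiableAt.differentiableWithinAt
    · intro u hu
      rw [interior_Icc] at hu
      have hu1 := hu.1
      have hu2 := hu.2
      rw [(hder u (by linarith)).deriv]
      have h1 := hpos (u + t * I) (by rw [line_re]; linarith)
      have h2 := log_norm_S (σ := u) (t := t) (by linarith) (by linarith)
      rw [hB]; linarith
  have hle : σ1 ≤ σ0 := by linarith
  have hmv := hmono (left_mem_Icc.mpr hle) (right_mem_Icc.mpr hle) hle
  simp only at hmv
  have hB1 : B * (σ0 - σ1) * lx ≤ B := by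
    have h1 : (σ0 - σ1) * lx ≤ 1 := by
      rw [← le_div_iff₀ hlx0]; linarith
    rw [mul_assoc]
    exact (mul_le_mul_of_nonneg_left h1 hB0).trans_eq (mul_one B)
  have hfin : Real.log ‖LFunction χ (σ1 + t * I)‖ * lx ≤
      Real.log ‖LFunction χ (σ0 + t * I)‖ * lx + B := by
    have : Real.log ‖LFunction χ (σ1 + t * I)‖ ≤
      Real.log ‖LFunction χ (σ0 + t * I)‖ + B * (σ0 - σ1) := by linarith
    have h := mul_le_mul_of_nonneg_right this hlx0.le
    rw [add_mul] at h
    linarith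
  linarith

end Stmt6

open Complex Real Finset ArithmeticFunction

theorem stmt6 :
    ∃ C : ℝ, ∀ (y t : ℝ), 2 ≤ y → ∀ (q : ℕ) [NeZero q], 1 < q →
      ∀ χ : DirichletCharacter ℂ q, χ.IsPrimitive → dirichletRH χ →
      ∀ x : ℝ, 2 ≤ x → x ≤ (q : ℝ) →
      Real.log (‖
          (DirichletCharacter.LFunction χ (1 / 2 + 1 / Real.log y + t * Complex.I))‖)
      ≤ (∑ n ∈ Finset.Icc 1 ⌊x⌋₊,
            χ n * (ArithmeticFunction.vonMangoldt n : ℂ) /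
              ((n : ℂ) ^ (((1 / 2 + max (1 / Real.log y) (1 / Real.log x) : ℝ) : ℂ)
                  + t * Complex.I) * (Real.log n : ℂ)) *
              ((Real.log (x / n) / Real.log x : ℝ) : ℂ)).re
        + (Real.log q + max 0 (Real.log t)) / Real.log x + C / Real.log x := by
  obtain ⟨C, hC⟩ := Stmt6.final
  refine ⟨C, fun y t hy q _ hq χ hp hRH x hx _ => ?_⟩
  have h := hC q hq χ hp hRH x y t hx hy
  have hlx : 0 < Real.log x := Real.log_pos (by linarith)
  have e1 : (1 / 2 + 1 / Real.log y + t * Complex.I : ℂ) =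
      ((1 / 2 + 1 / Real.log y : ℝ) : ℂ) + t * Complex.I := by push_cast; ring
  set S : ℂ := ((1 / 2 + max (1 / Real.log y) (1 / Real.log x) : ℝ) : ℂ) + t * Complex.I with hS
  have e2 : (∑ n ∈ Finset.Icc 1 ⌊x⌋₊, χ n * (ArithmeticFunction.vonMangoldt n : ℂ) /
      ((n : ℂ) ^ S * (Real.log n : ℂ)) * ((Real.log (x / n) / Real.log x : ℝ) : ℂ)) =
      Stmt6.wsum χ x S / ((Real.log x : ℝ) : ℂ) := by
    rw [Stmt6.wsum, Finset.sum_div]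
    refine Finset.sum_congr rfl fun n _ => ?_
    rw [Stmt6.vmc, Complex.ofReal_div, Complex.ofReal_div]
    simp only [div_eq_mul_inv, mul_inv]
    ring
  rw [e1, e2, Complex.div_ofReal_re, ← add_div, ← add_div, le_div_iff₀ hlx]
  exact h
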